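/- arXiv:2203.01896 — 2 statements merged into one kernel-verified Lean document; each statement's English description precedes it below -/
import Mathlib

section
/- Let G be a full DAG with a fixed ample framing inducing a {1,2}-weighting ω on its edges. Then there is a bijection between the set of non-exceptional routes of G and the set T(Λ(G)) consisting of the isomorphism classes of indecomposable Λ(G)-modules together with the shifted projectives P_i[1] for each inner vertex i, where Λ(G) is the gentle algebra associated to G. -/
/-- A finite directed acyclic multigraph. -/
structure DAG where
  V : Type
  E : Type
  [fintypeV : Fintype V]
  [fintypeE : Fintype E]
  [decEqV : DecidableEq V]
  [decEqE : DecidableEq E]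
  src : E → V
  tgt : E → V
  acyclic : ∀ v : V,
    ¬ Relation.TransGen (fun a b : V => ∃ e : E, src e = a ∧ tgt e = b) v v

attribute [instance] DAG.fintypeV DAG.fintypeE DAG.decEqV DAG.decEqE

namespace DAG

variable (G : DAG)

/-- A vertex with no incoming edges. -/
def IsSource (v : G.V) : Prop := ∀ e : G.E, G.tgt e ≠ v

/-- A vertex with no outgoing edges. -/
def IsSink (v : G.V) : Prop := ∀ e : G.E, G.src e ≠ v

/-- An inner vertex is neither a source nor a sink. -/
def IsInner (v : G.V) : Prop := ¬ G.IsSource v ∧ ¬ G.IsSink v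

instance : DecidablePred G.IsSource := fun v =>
  decidable_of_iff (∀ e : G.E, G.tgt e ≠ v) Iff.rfl

instance : DecidablePred G.IsSink := fun v =>
  decidable_of_iff (∀ e : G.E, G.src e ≠ v) Iff.rfl

instance : DecidablePred G.IsInner := fun v =>
  decidable_of_iff (¬ G.IsSource v ∧ ¬ G.IsSink v) Iff.rfl

/-- In-degree: the number of edges with target `v`. -/
def indeg (v : G.V) : ℕ := Fintype.card {e : G.E // G.tgt e = v}

/-- Out-degree: the number of edges with source `v`. -/
def outdeg (v : G.V) : ℕ := Fintype.card {e : G.E // G.src e = v}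

/-- A DAG is full if every inner vertex has in-degree 2 and out-degree 2. -/
def Full : Prop := ∀ v : G.V, G.IsInner v → G.indeg v = 2 ∧ G.outdeg v = 2

/-- A route: a maximal directed path, i.e. a nonempty list of consecutive edges
starting at a source and ending at a sink. -/
structure Route where
  edges : List G.E
  ne : edges ≠ []
  chain : edges.Chain' (fun e f => G.tgt e = G.src f)
  source_start : G.IsSource (G.src (edges.head ne))
  sink_end : G.IsSink (G.tgt (edges.getLast ne))

/-- A route visits a vertex if the vertex is an endpoint of one of its edges. -/
def Route.visits (R : G.Route) (v : G.V) : Prop :=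
  ∃ e ∈ R.edges, G.src e = v ∨ G.tgt e = v

/-- A framing: a linear order on the incoming edges and a linear order on the
outgoing edges of every inner vertex. -/
structure Framing where
  inlt : G.E → G.E → Prop
  outlt : G.E → G.E → Prop
  inlt_tgt : ∀ {e f}, inlt e f → G.tgt e = G.tgt f
  inlt_inner : ∀ {e f}, inlt e f → G.IsInner (G.tgt e)
  inlt_irrefl : ∀ e, ¬ inlt e e
  inlt_trans : ∀ {e f g}, inlt e f → inlt f g → inlt e g
  inlt_total : ∀ e f, G.tgt e = G.tgt f → G.IsInner (G.tgt e) → e ≠ f →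
    inlt e f ∨ inlt f e
  outlt_src : ∀ {e f}, outlt e f → G.src e = G.src f
  outlt_inner : ∀ {e f}, outlt e f → G.IsInner (G.src e)
  outlt_irrefl : ∀ e, ¬ outlt e e
  outlt_trans : ∀ {e f g}, outlt e f → outlt f g → outlt e g
  outlt_total : ∀ e f, G.src e = G.src f → G.IsInner (G.src e) → e ≠ f →
    outlt e f ∨ outlt f e

/-- The induced order on paths ending at a common vertex: compare the two edges
just before the longest common suffix. -/
def inPathLt (F : G.Framing) (P Q : List G.E) : Prop :=
  ∃ (p q s : List G.E) (e f : G.E), e ≠ f ∧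
    P = p ++ e :: s ∧ Q = q ++ f :: s ∧ F.inlt e f

/-- The induced order on paths starting at a common vertex: compare the two edges
just after the longest common prefix. -/
def outPathLt (F : G.Framing) (P Q : List G.E) : Prop :=
  ∃ (s p q : List G.E) (e f : G.E), e ≠ f ∧
    P = s ++ e :: p ∧ Q = s ++ f :: q ∧ F.outlt e f

/-- Routes `P` and `Q` are in conflict (with `P` playing the first role) if they
pass through a common inner vertex `v` with `Pv ≺ Qv` in the in-order and
`vQ ≺ vP` in the out-order. -/
def Conflict (F : G.Framing) (P Q : G.Route) : Prop :=
  ∃ (v : G.V) (a b c d : List G.E) (ea ec : G.E),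
    P.edges = a ++ [ea] ++ b ∧ Q.edges = c ++ [ec] ++ d ∧
    G.tgt ea = v ∧ G.tgt ec = v ∧ b ≠ [] ∧ d ≠ [] ∧
    G.inPathLt F (a ++ [ea]) (c ++ [ec]) ∧ G.outPathLt F d b

/-- Two routes are coherent if they are not in conflict at any common inner
vertex (in either order). -/
def CoherentPair (F : G.Framing) (P Q : G.Route) : Prop :=
  ¬ G.Conflict F P Q ∧ ¬ G.Conflict F Q P

/-- A route is exceptional if it is coherent with every route. -/
def Exceptional (F : G.Framing) (R : G.Route) : Prop :=
  ∀ S : G.Route, G.CoherentPair F R S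

/-- An edge is idle if it is the unique incoming or the unique outgoing edge of
an inner vertex. -/
def Idle (e : G.E) : Prop :=
  (G.IsInner (G.tgt e) ∧ ∀ f : G.E, G.tgt f = G.tgt e → f = e) ∨
  (G.IsInner (G.src e) ∧ ∀ f : G.E, G.src f = G.src e → f = e)

/-- A framing is ample if every non-idle edge lies on an exceptional route. -/
def Ample (F : G.Framing) : Prop :=
  ∀ e : G.E, ¬ G.Idle e → ∃ R : G.Route, G.Exceptional F R ∧ e ∈ R.edges

/-- `e` is smallest among the edges entering its target. -/
def MinIn (F : G.Framing) (e : G.E) : Prop :=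
  ∀ f : G.E, G.tgt f = G.tgt e → f ≠ e → F.inlt e f

/-- `e` is largest among the edges entering its target. -/
def MaxIn (F : G.Framing) (e : G.E) : Prop :=
  ∀ f : G.E, G.tgt f = G.tgt e → f ≠ e → F.inlt f e

/-- `e` is smallest among the edges leaving its source. -/
def MinOut (F : G.Framing) (e : G.E) : Prop :=
  ∀ f : G.E, G.src f = G.src e → f ≠ e → F.outlt e f

/-- `e` is largest among the edges leaving its source. -/
def MaxOut (F : G.Framing) (e : G.E) : Prop :=
  ∀ f : G.E, G.src f = G.src e → f ≠ e → F.outlt f e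

/-- The characteristic vector of a route. -/
noncomputable def charVec (R : G.Route) : G.E → ℝ :=
  fun e => if e ∈ R.edges then 1 else 0

end DAG
namespace DAG

variable (G : DAG)

-- The `{1,2}`-weight of an edge induced by an ample framing: weight `1` if
-- the edge is minimal in the framing orders at its (inner) endpoints, and
-- weight `2` otherwise.
open Classical in
noncomputable def weight (F : G.Framing) (e : G.E) : ℕ :=
  if (G.IsInner (G.tgt e) → G.MinIn F e) ∧ (G.IsInner (G.src e) → G.MinOut F e)
  then 1 else 2

/-- The vertices of the quiver `Q` of `Λ(G)`: the inner vertices of `G`. -/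
def InnerV := {v : G.V // G.IsInner v}

/-- The source of the quiver arrow determined by an edge of `G` between inner
vertices: the edge itself if it has weight 1, the reversed edge otherwise. -/
noncomputable def arrowSrc (F : G.Framing) (e : G.E)
    (hs : G.IsInner (G.src e)) (ht : G.IsInner (G.tgt e)) : G.InnerV :=
  if G.weight F e = 1 then ⟨G.src e, hs⟩ else ⟨G.tgt e, ht⟩

/-- The target of the quiver arrow determined by an edge of `G` between inner
vertices. -/
noncomputable def arrowTgt (F : G.Framing) (e : G.E)
    (hs : G.IsInner (G.src e)) (ht : G.IsInner (G.tgt e)) : G.InnerV :=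
  if G.weight F e = 1 then ⟨G.tgt e, ht⟩ else ⟨G.src e, hs⟩

/-- A (finite dimensional) module over the gentle algebra `Λ(G) = KQ/I`,
presented as a representation of the quiver `Q` satisfying the relations:
the composite along any length-two path of `Q` whose two arrows come from
edges of different weights vanishes. -/
structure Rep (F : G.Framing) (K : Type) [Field K] where
  space : G.InnerV → Type
  [acg : ∀ v, AddCommGroup (space v)]
  [mod : ∀ v, Module K (space v)]
  [fd : ∀ v, FiniteDimensional K (space v)]
  map : ∀ (e : G.E) (hs : G.IsInner (G.src e)) (ht : G.IsInner (G.tgt e)),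
    space (G.arrowSrc F e hs ht) →ₗ[K] space (G.arrowTgt F e hs ht)
  rel : ∀ (e₁ e₂ : G.E) (hs₁ : G.IsInner (G.src e₁)) (ht₁ : G.IsInner (G.tgt e₁))
    (hs₂ : G.IsInner (G.src e₂)) (ht₂ : G.IsInner (G.tgt e₂))
    (h : G.arrowTgt F e₁ hs₁ ht₁ = G.arrowSrc F e₂ hs₂ ht₂),
    G.weight F e₁ ≠ G.weight F e₂ →
    ∀ x, map e₂ hs₂ ht₂ (cast (congrArg space h) (map e₁ hs₁ ht₁ x)) = 0

attribute [instance] Rep.acg Rep.mod Rep.fd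

variable {G} in
/-- A morphism of representations of the quiver with relations. -/
structure RepHom {F : G.Framing} {K : Type} [Field K] (M N : G.Rep F K) where
  app : ∀ v : G.InnerV, M.space v →ₗ[K] N.space v
  comm : ∀ (e : G.E) (hs : G.IsInner (G.src e)) (ht : G.IsInner (G.tgt e))
    (x : M.space (G.arrowSrc F e hs ht)),
    app (G.arrowTgt F e hs ht) (M.map e hs ht x) =
      N.map e hs ht (app (G.arrowSrc F e hs ht) x)

variable {G} in
/-- Two representations are isomorphic if there is a morphism which is
bijective at every vertex. -/
def RepIso {F : G.Framing} {K : Type} [Field K] (M N : G.Rep F K) : Prop :=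
  ∃ φ : RepHom M N, ∀ v : G.InnerV, Function.Bijective (φ.app v)

variable {G} in
/-- A representation is indecomposable iff it is nonzero and its only
idempotent endomorphisms are `0` and the identity. -/
def Indecomposable {F : G.Framing} {K : Type} [Field K] (M : G.Rep F K) : Prop :=
  (∃ (v : G.InnerV) (x : M.space v), x ≠ 0) ∧
  ∀ φ : RepHom M M,
    (∀ (v : G.InnerV) (x : M.space v), φ.app v (φ.app v x) = φ.app v x) →
    (∀ (v : G.InnerV) (x : M.space v), φ.app v x = 0) ∨
    (∀ (v : G.InnerV) (x : M.space v), φ.app v x = x)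

/-- The set `T(Λ(G))`: isomorphism classes of indecomposable `Λ(G)`-modules
together with one shifted projective `P_i[1]` for each vertex `i` of the
quiver. -/
def TLambda (F : G.Framing) (K : Type) [Field K] : Type 1 :=
  Quot (fun M N : {M : G.Rep F K // Indecomposable M} => RepIso M.1 N.1) ⊕
    G.InnerV

end DAG


namespace DAG
namespace Aux

/-- A directed path from `u` to `w`. -/
def IsP {V E : Type} (s t : E → V) : V → List E → V → Prop
  | u, [], w => u = w
  | u, e :: l, w => s e = u ∧ IsP s t (t e) l w

section path
variable {V E : Type} {s t : E → V}

lemma isP_append {u w : V} {l m : List E} :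
    IsP s t u (l ++ m) w ↔ ∃ x, IsP s t u l x ∧ IsP s t x m w := by
  induction l generalizing u with
  | nil => simp [IsP]
  | cons e l ih => simp [IsP, ih, and_assoc]

lemma isP_reverse {u w : V} {l : List E} (h : IsP s t u l w) :
    IsP t s w l.reverse u := by
  induction l generalizing u with
  | nil => simp only [IsP] at h; simp [IsP, h]
  | cons e l ih =>
    obtain ⟨h1, h2⟩ := h
    rw [List.reverse_cons, isP_append]
    exact ⟨_, ih h2, rfl, h1⟩

lemma isP_end_unique {u w w' : V} {l : List E} (h : IsP s t u l w) (h' : IsP s t u l w') :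
    w = w' := by
  induction l generalizing u with
  | nil => simp only [IsP] at h h'; exact h.symm.trans h'
  | cons e l ih => exact ih h.2 h'.2

lemma isP_end {u w : V} {l : List E} (h : IsP s t u l w) : u = w ∨ ∃ e ∈ l, t e = w := by
  induction l generalizing u with
  | nil => exact Or.inl h
  | cons e l ih =>
    rcases ih h.2 with h1 | ⟨f, hf, h1⟩
    · exact Or.inr ⟨e, by simp, h1⟩
    · exact Or.inr ⟨f, by simp [hf], h1⟩

lemma isP_chain {u w : V} {l : List E} (h : IsP s t u l w) :
    l.IsChain (fun e f => t e = s f) := by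
  induction l generalizing u with
  | nil => simp
  | cons e l ih =>
    cases l with
    | nil => simp
    | cons f l =>
      rw [List.isChain_cons_cons]
      exact ⟨h.2.1.symm, ih h.2⟩

lemma isP_head {u w : V} {l : List E} (h : IsP s t u l w) (hl : l ≠ []) : s (l.head hl) = u := by
  cases l with
  | nil => simp at hl
  | cons e l => exact h.1

lemma isP_last {u w : V} {l : List E} (h : IsP s t u l w) (hl : l ≠ []) :
    t (l.getLast hl) = w := by
  induction l generalizing u with
  | nil => simp at hl
  | cons e l ih =>
    cases l with
    | nil => exact h.2
    | cons f l => exact ih h.2 (by simp)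

lemma chain_isP {l : List E} (h : l.IsChain (fun e f => t e = s f)) (hl : l ≠ []) :
    IsP s t (s (l.head hl)) l (t (l.getLast hl)) := by
  induction l with
  | nil => simp at hl
  | cons e l ih =>
    cases l with
    | nil => exact ⟨rfl, rfl⟩
    | cons f l =>
      rw [List.isChain_cons_cons] at h
      refine ⟨rfl, ?_⟩
      have := ih h.2 (by simp)
      rw [List.head_cons, ← h.1] at this
      exact this

lemma fwd_exists (rk : V → ℕ) (hrk : ∀ e, rk (t e) < rk (s e)) (p : E → Prop)
    (hp : ∀ v, (∃ e, t e = v) → (∃ e, s e = v) → ∃ e, s e = v ∧ p e) :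
    ∀ v, (∃ e, t e = v) → ∃ l w, IsP s t v l w ∧ (∀ e, s e ≠ w) ∧ ∀ e ∈ l, p e := by
  have key : ∀ n v, rk v ≤ n → (∃ e, t e = v) →
      ∃ l w, IsP s t v l w ∧ (∀ e, s e ≠ w) ∧ ∀ e ∈ l, p e := by
    intro n
    induction n with
    | zero =>
      intro v hv _
      refine ⟨[], v, rfl, ?_, by simp⟩
      rintro e rfl
      have := hrk e
      omega
    | succ n ih =>
      intro v hv hv'
      by_cases h : ∃ e, s e = v
      · obtain ⟨e, he, hpe⟩ := hp v hv' h
        have := hrk e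
        rw [he] at this
        obtain ⟨l, w, h1, h2, h3⟩ := ih (t e) (by omega) ⟨e, rfl⟩
        exact ⟨e :: l, w, ⟨he, h1⟩, h2, by simpa [hpe] using h3⟩
      · push Not at h
        exact ⟨[], v, rfl, h, by simp⟩
  exact fun v => key _ v le_rfl

lemma fwd_unique (p : E → Prop)
    (hp : ∀ e f, (∃ g, t g = s e) → s e = s f → p e → p f → e = f)
    {l l' : List E} {v w w' : V} (hv : ∃ g, t g = v)
    (h : IsP s t v l w) (h' : IsP s t v l' w')
    (hw : ∀ e, s e ≠ w) (hw' : ∀ e, s e ≠ w')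
    (hl : ∀ e ∈ l, p e) (hl' : ∀ e ∈ l', p e) : l = l' := by
  induction l generalizing v l' with
  | nil =>
    cases l' with
    | nil => rfl
    | cons e l' =>
      simp only [IsP] at h h'
      exact absurd (h'.1.trans h) (hw e)
  | cons e l ih =>
    cases l' with
    | nil =>
      simp only [IsP] at h h'
      exact absurd (h.1.trans h') (hw' e)
    | cons f l' =>
      obtain ⟨g, hg⟩ := hv
      have : e = f := hp e f ⟨g, by rw [hg, h.1]⟩ (h.1.trans h'.1.symm) (hl e (by simp))
        (hl' f (by simp))
      subst this
      rw [ih ⟨e, rfl⟩ h.2 h'.2 (fun x hx => hl x (by simp [hx])) (fun x hx => hl' x (by simp [hx]))]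

lemma isP_rk (rk : V → ℕ) (hrk : ∀ e, rk (s e) < rk (t e)) {u w : V} {l : List E}
    (h : IsP s t u l w) : ∀ e ∈ l, rk u ≤ rk (s e) := by
  induction l generalizing u with
  | nil => simp
  | cons e l ih =>
    intro f hf
    rcases List.mem_cons.1 hf with rfl | hf
    · rw [h.1]
    · have h1 := ih h.2 f hf
      have h2 := hrk e
      rw [h.1] at h2
      omega

lemma isP_src_inj (rk : V → ℕ) (hrk : ∀ e, rk (s e) < rk (t e)) {u w : V} {l : List E}
    (h : IsP s t u l w) : ∀ e ∈ l, ∀ f ∈ l, s e = s f → e = f := by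
  induction l generalizing u with
  | nil => simp
  | cons g l ih =>
    intro e he f hf hef
    rcases List.mem_cons.1 he with rfl | he' <;> rcases List.mem_cons.1 hf with rfl | hf'
    · rfl
    · have := isP_rk rk hrk h.2 f hf'
      have := hrk e
      rw [hef] at this
      omega
    · have := isP_rk rk hrk h.2 e he'
      have := hrk f
      rw [hef] at *
      omega
    · exact ih h.2 e he' f hf' hef

lemma isP_tgt_inj (rk : V → ℕ) (hrk : ∀ e, rk (s e) < rk (t e)) {u w : V} {l : List E}
    (h : IsP s t u l w) : ∀ e ∈ l, ∀ f ∈ l, t e = t f → e = f := by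
  induction l generalizing u with
  | nil => simp
  | cons g l ih =>
    intro e he f hf hef
    rcases List.mem_cons.1 he with rfl | he' <;> rcases List.mem_cons.1 hf with rfl | hf'
    · rfl
    · have := isP_rk rk hrk h.2 f hf'
      have := hrk f
      rw [hef] at *
      omega
    · have := isP_rk rk hrk h.2 e he'
      have := hrk e
      rw [hef] at *
      omega
    · exact ih h.2 e he' f hf' hef

lemma isP_edges_det (rk : V → ℕ) (hrk : ∀ e, rk (s e) < rk (t e)) {u w w' : V} {l l' : List E}
    (h : IsP s t u l w) (h' : IsP s t u l' w') (hl : ∀ e, e ∈ l ↔ e ∈ l') : l = l' := by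
  induction l generalizing u l' with
  | nil =>
    cases l' with
    | nil => rfl
    | cons e l' => exact absurd ((hl e).2 (by simp)) (by simp)
  | cons e l ih =>
    cases l' with
    | nil => exact absurd ((hl e).1 (by simp)) (by simp)
    | cons f l' =>
      have hef : e = f := isP_src_inj rk hrk h' e ((hl e).1 (by simp)) f (by simp)
        (h.1.trans h'.1.symm)
      subst hef
      have n1 : e ∉ l := fun hm => by
        have := isP_rk rk hrk h.2 e hm
        have := hrk e
        omega
      have n2 : e ∉ l' := fun hm => by
        have := isP_rk rk hrk h'.2 e hm
        have := hrk e
        omega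
      rw [ih h.2 h'.2 ?_]
      intro x
      have := hl x
      by_cases hx : x = e
      · subst hx; simp [n1, n2]
      · simpa [hx] using this

lemma isP_const {α : Type} (c : V → α) {u w : V} {l : List E}
    (h : IsP s t u l w) (hc : ∀ e ∈ l, c (s e) = c (t e)) : ∀ e ∈ l, c (t e) = c u := by
  induction l generalizing u with
  | nil => simp
  | cons g l ih =>
    intro e he
    have hg : c (t g) = c u := by rw [← hc g (by simp), h.1]
    rcases List.mem_cons.1 he with rfl | he'
    · exact hg
    · rw [ih h.2 (fun x hx => hc x (by simp [hx])) e he', hg]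

lemma isP_src_mem {u w : V} {l : List E} (h : IsP s t u l w) :
    ∀ e ∈ l, s e = u ∨ ∃ f ∈ l, t f = s e := by
  induction l generalizing u with
  | nil => simp
  | cons g l ih =>
    intro e he
    rcases List.mem_cons.1 he with rfl | he'
    · exact Or.inl h.1
    · rcases ih h.2 e he' with h1 | ⟨f, hf, h1⟩
      · exact Or.inr ⟨g, by simp, h1.symm⟩
      · exact Or.inr ⟨f, by simp [hf], h1⟩

lemma split_first {p : E → Prop} {b b' m m' : List E} {e e' : E}
    (h : b ++ e :: m = b' ++ e' :: m') (hb : ∀ x ∈ b, p x) (hb' : ∀ x ∈ b', p x)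
    (he : ¬ p e) (he' : ¬ p e') : b = b' ∧ e = e' ∧ m = m' := by
  induction b generalizing b' with
  | nil =>
    cases b' with
    | nil => simpa using h
    | cons x b' =>
      simp only [List.nil_append, List.cons_append, List.cons.injEq] at h
      exact absurd (hb' x (by simp)) (h.1 ▸ he)
  | cons y b ih =>
    cases b' with
    | nil =>
      simp only [List.nil_append, List.cons_append, List.cons.injEq] at h
      exact absurd (hb y (by simp)) (h.1 ▸ he')
    | cons x b' =>
      simp only [List.cons_append, List.cons.injEq] at h
      obtain ⟨h1, h2, h3⟩ := ih h.2 (fun x hx => hb x (by simp [hx]))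
        (fun x hx => hb' x (by simp [hx]))
      exact ⟨by rw [h.1, h1], h2, h3⟩

lemma split_last {p : E → Prop} {b b' m m' : List E} {e e' : E}
    (h : b ++ e :: m = b' ++ e' :: m') (hb : ∀ x ∈ m, p x) (hb' : ∀ x ∈ m', p x)
    (he : ¬ p e) (he' : ¬ p e') : b = b' ∧ e = e' ∧ m = m' := by
  have h' := congrArg List.reverse h
  simp only [List.reverse_append, List.reverse_cons, List.append_assoc, List.singleton_append] at h'
  obtain ⟨h1, h2, h3⟩ := split_first (p := p) h' (by simpa using hb) (by simpa using hb') he he'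
  exact ⟨by simpa using h3, h2, by simpa using h1⟩

lemma exists_first (p : E → Prop) (l : List E) (h : ∃ e ∈ l, ¬ p e) :
    ∃ b e m, l = b ++ e :: m ∧ (∀ x ∈ b, p x) ∧ ¬ p e := by
  induction l with
  | nil => simp at h
  | cons x l ih =>
    by_cases hx : p x
    · obtain ⟨e, he, hpe⟩ := h
      rcases List.mem_cons.1 he with rfl | he
      · exact absurd hx hpe
      · obtain ⟨b, e, m, h1, h2, h3⟩ := ih ⟨e, he, hpe⟩
        exact ⟨x :: b, e, m, by rw [h1]; rfl, by simpa [hx] using h2, h3⟩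
    · exact ⟨[], x, l, rfl, by simp, hx⟩

lemma exists_last (p : E → Prop) (l : List E) (h : ∃ e ∈ l, ¬ p e) :
    ∃ b e m, l = b ++ e :: m ∧ (∀ x ∈ m, p x) ∧ ¬ p e := by
  obtain ⟨b, e, m, h1, h2, h3⟩ := exists_first p l.reverse (by simpa using h)
  refine ⟨m.reverse, e, b.reverse, ?_, by simpa using h2, h3⟩
  have := congrArg List.reverse h1
  simpa using this

end path

lemma exists_rk (G : DAG) : ∃ rk : G.V → ℕ, ∀ e, rk (G.src e) < rk (G.tgt e) := by
  classical
  let r : G.V → G.V → Prop := Relation.TransGen (fun a b : G.V => ∃ e : G.E, G.src e = a ∧ G.tgt e = b)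
  refine ⟨fun v => (Finset.univ.filter (fun u => r u v)).card, fun e => ?_⟩
  apply Finset.card_lt_card
  have h0 : r (G.src e) (G.tgt e) := Relation.TransGen.single ⟨e, rfl, rfl⟩
  refine ⟨fun u hu => ?_, fun h => ?_⟩
  · simp only [Finset.mem_filter, Finset.mem_univ, true_and] at hu ⊢
    exact hu.trans h0
  · have := h (x := G.src e) (by simpa using h0)
    simp only [Finset.mem_filter, Finset.mem_univ, true_and] at this
    exact G.acyclic _ this

lemma exists_crk (G : DAG) : ∃ rk : G.V → ℕ, ∀ e, rk (G.tgt e) < rk (G.src e) := by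
  obtain ⟨rk, h⟩ := exists_rk G
  refine ⟨fun v => Finset.univ.sup rk - rk v, fun e => ?_⟩
  have h1 := h e
  have h2 : rk (G.tgt e) ≤ Finset.univ.sup rk := Finset.le_sup (Finset.mem_univ _)
  show _ - _ < _ - _
  omega

section dag
variable {G : DAG}

lemma mk_route {l : List G.E} {u w : G.V} (hl : l ≠ []) (h : IsP G.src G.tgt u l w)
    (hu : G.IsSource u) (hw : G.IsSink w) : ∃ R : G.Route, R.edges = l :=
  ⟨⟨l, hl, isP_chain h, by rw [isP_head h hl]; exact hu, by rw [isP_last h hl]; exact hw⟩, rfl⟩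

lemma route_path (R : G.Route) :
    ∃ u w, IsP G.src G.tgt u R.edges w ∧ G.IsSource u ∧ G.IsSink w :=
  ⟨_, _, chain_isP R.chain R.ne, R.source_start, R.sink_end⟩

lemma route_ext {R R' : G.Route} (h : R.edges = R'.edges) : R = R' := by
  cases R; cases R'; simp only at h; subst h; rfl

lemma inner_of {e f : G.E} (h : G.tgt e = G.src f) : G.IsInner (G.tgt e) :=
  ⟨fun hs => hs e rfl, fun hs => hs f h.symm⟩

lemma tgt_inner {v : G.V} (h1 : ∃ e, G.tgt e = v) (h2 : ∃ e, G.src e = v) : G.IsInner v := by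
  obtain ⟨e, rfl⟩ := h1
  obtain ⟨f, h⟩ := h2
  exact inner_of h.symm

lemma fwd_any (e : G.E) : ∃ l w, IsP G.src G.tgt (G.tgt e) l w ∧ G.IsSink w := by
  obtain ⟨rk, hrk⟩ := exists_crk G
  obtain ⟨l, w, h1, h2, -⟩ := fwd_exists rk hrk (fun _ => True)
    (fun v _ ⟨e, he⟩ => ⟨e, he, trivial⟩) (G.tgt e) ⟨e, rfl⟩
  exact ⟨l, w, h1, h2⟩

lemma bwd_any (e : G.E) : ∃ l u, IsP G.src G.tgt u l (G.src e) ∧ G.IsSource u := by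
  obtain ⟨rk, hrk⟩ := exists_rk G
  obtain ⟨l, w, h1, h2, -⟩ := fwd_exists (s := G.tgt) (t := G.src) rk hrk (fun _ => True)
    (fun v _ ⟨e, he⟩ => ⟨e, he, trivial⟩) (G.src e) ⟨e, rfl⟩
  exact ⟨l.reverse, w, isP_reverse h1, h2⟩

/-- main conflict lemma -/
lemma exc_local (F : G.Framing) {R : G.Route} (hR : G.Exceptional F R)
    {a s c : List G.E} {e f : G.E} (h : R.edges = a ++ e :: (s ++ f :: c))
    {e' f' : G.E} (he : G.tgt e' = G.tgt e) (hf : G.src f' = G.src f) :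
    ¬ (F.inlt e' e ∧ F.outlt f f') ∧ ¬ (F.inlt e e' ∧ F.outlt f' f) := by
  obtain ⟨a', u', ha', hu'⟩ := bwd_any e'
  obtain ⟨c', w', hc', hw'⟩ := fwd_any f'
  obtain ⟨u, w, hp, -, -⟩ := route_path R
  rw [h, isP_append] at hp
  obtain ⟨x, -, -, hp⟩ := hp
  rw [isP_append] at hp
  obtain ⟨y, hs, hfy, -⟩ := hp
  obtain ⟨S, hS⟩ := mk_route (l := a' ++ e' :: (s ++ f' :: c')) (u := u') (w := w') (by simp)
    (isP_append.2 ⟨_, ha', rfl, by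
      rw [he]
      exact isP_append.2 ⟨_, hs, hf.trans hfy, hc'⟩⟩) hu' hw'
  constructor
  · rintro ⟨h1, h2⟩
    refine (hR S).2 ⟨G.tgt e, a', s ++ f' :: c', a, s ++ f :: c, e', e, by simp [hS], by simp [h],
      he, rfl, by simp, by simp, ⟨a', a, [], e', e, ?_, rfl, rfl, h1⟩,
      ⟨s, c, c', f, f', ?_, rfl, rfl, h2⟩⟩
    · rintro rfl; exact F.inlt_irrefl _ h1
    · rintro rfl; exact F.outlt_irrefl _ h2
  · rintro ⟨h1, h2⟩
    refine (hR S).1 ⟨G.tgt e, a, s ++ f :: c, a', s ++ f' :: c', e, e', by simp [h], by simp [hS],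
      rfl, he, by simp, by simp, ⟨a, a', [], e, e', ?_, rfl, rfl, h1⟩,
      ⟨s, c', c, f', f, ?_, rfl, rfl, h2⟩⟩
    · rintro rfl; exact F.inlt_irrefl _ h1
    · rintro rfl; exact F.outlt_irrefl _ h2

lemma in_other (hfull : G.Full) {e : G.E} (h : G.IsInner (G.tgt e)) :
    ∃ e', e' ≠ e ∧ G.tgt e' = G.tgt e ∧ ∀ f, G.tgt f = G.tgt e → f = e ∨ f = e' := by
  have h2 := (hfull _ h).1
  unfold indeg at h2
  rw [← Nat.card_eq_fintype_card, Nat.card_eq_two_iff' (⟨e, rfl⟩ : {f : G.E // G.tgt f = G.tgt e})] at h2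
  obtain ⟨⟨e', he'⟩, h3, h4⟩ := h2
  refine ⟨e', fun h => h3 (Subtype.ext h), he', fun f hf => ?_⟩
  by_cases hfe : f = e
  · exact Or.inl hfe
  · exact Or.inr (congrArg Subtype.val (h4 ⟨f, hf⟩ (fun h => hfe (congrArg Subtype.val h))))

lemma out_other (hfull : G.Full) {e : G.E} (h : G.IsInner (G.src e)) :
    ∃ e', e' ≠ e ∧ G.src e' = G.src e ∧ ∀ f, G.src f = G.src e → f = e ∨ f = e' := by
  have h2 := (hfull _ h).2
  unfold outdeg at h2
  rw [← Nat.card_eq_fintype_card, Nat.card_eq_two_iff' (⟨e, rfl⟩ : {f : G.E // G.src f = G.src e})] at h2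
  obtain ⟨⟨e', he'⟩, h3, h4⟩ := h2
  refine ⟨e', fun h => h3 (Subtype.ext h), he', fun f hf => ?_⟩
  by_cases hfe : f = e
  · exact Or.inl hfe
  · exact Or.inr (congrArg Subtype.val (h4 ⟨f, hf⟩ (fun h => hfe (congrArg Subtype.val h))))

lemma in_dich (hfull : G.Full) (F : G.Framing) {e : G.E} (h : G.IsInner (G.tgt e)) :
    ∃ e', e' ≠ e ∧ G.tgt e' = G.tgt e ∧
      ((G.MinIn F e ∧ F.inlt e e' ∧ ¬ G.MaxIn F e) ∨ (G.MaxIn F e ∧ F.inlt e' e ∧ ¬ G.MinIn F e)) := by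
  obtain ⟨e', h1, h2, h3⟩ := in_other hfull h
  refine ⟨e', h1, h2, ?_⟩
  rcases F.inlt_total e e' h2.symm h h1.symm with h4 | h4
  · refine Or.inl ⟨fun f hf hfe => ?_, h4, fun hm => ?_⟩
    · rcases h3 f hf with rfl | rfl
      · exact absurd rfl hfe
      · exact h4
    · exact F.inlt_irrefl _ (F.inlt_trans h4 (hm e' h2 h1))
  · refine Or.inr ⟨fun f hf hfe => ?_, h4, fun hm => ?_⟩
    · rcases h3 f hf with rfl | rfl
      · exact absurd rfl hfe
      · exact h4
    · exact F.inlt_irrefl _ (F.inlt_trans h4 (hm e' h2 h1))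

lemma out_dich (hfull : G.Full) (F : G.Framing) {e : G.E} (h : G.IsInner (G.src e)) :
    ∃ e', e' ≠ e ∧ G.src e' = G.src e ∧
      ((G.MinOut F e ∧ F.outlt e e' ∧ ¬ G.MaxOut F e) ∨ (G.MaxOut F e ∧ F.outlt e' e ∧ ¬ G.MinOut F e)) := by
  obtain ⟨e', h1, h2, h3⟩ := out_other hfull h
  refine ⟨e', h1, h2, ?_⟩
  rcases F.outlt_total e e' h2.symm h h1.symm with h4 | h4
  · refine Or.inl ⟨fun f hf hfe => ?_, h4, fun hm => ?_⟩
    · rcases h3 f hf with rfl | rfl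
      · exact absurd rfl hfe
      · exact h4
    · exact F.outlt_irrefl _ (F.outlt_trans h4 (hm e' h2 h1))
  · refine Or.inr ⟨fun f hf hfe => ?_, h4, fun hm => ?_⟩
    · rcases h3 f hf with rfl | rfl
      · exact absurd rfl hfe
      · exact h4
    · exact F.outlt_irrefl _ (F.outlt_trans h4 (hm e' h2 h1))

/-- On an exceptional route the in-type of an earlier edge is the out-type of a later one. -/
lemma exc_type (hfull : G.Full) (F : G.Framing) {R : G.Route} (hR : G.Exceptional F R)
    {a s c : List G.E} {e f : G.E} (h : R.edges = a ++ e :: (s ++ f :: c))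
    (hi : G.IsInner (G.tgt e)) (hi' : G.IsInner (G.src f)) :
    (G.MinIn F e ∧ G.MinOut F f) ∨ (G.MaxIn F e ∧ G.MaxOut F f) := by
  obtain ⟨e', h1, h2, h3⟩ := in_dich hfull F hi
  obtain ⟨f', k1, k2, k3⟩ := out_dich hfull F hi'
  have := exc_local F hR h h2 k2
  tauto

lemma good_edge (hfull : G.Full) (F : G.Framing) (hample : G.Ample F) (e : G.E) :
    ((G.IsInner (G.tgt e) → G.MinIn F e) ∧ (G.IsInner (G.src e) → G.MinOut F e)) ∨
    ((G.IsInner (G.tgt e) → G.MaxIn F e) ∧ (G.IsInner (G.src e) → G.MaxOut F e)) := by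
  have hid : ¬ G.Idle e := by
    rintro (⟨h, h'⟩ | ⟨h, h'⟩)
    · obtain ⟨e', h1, h2, -⟩ := in_other hfull h
      exact h1 (h' e' h2)
    · obtain ⟨e', h1, h2, -⟩ := out_other hfull h
      exact h1 (h' e' h2)
  obtain ⟨R, hR, he⟩ := hample e hid
  obtain ⟨a, c, hac⟩ := List.append_of_mem he
  obtain ⟨u, w, hp, hu, hw⟩ := route_path R
  rw [hac, isP_append] at hp
  obtain ⟨x, hpa, hx, hpc⟩ := hp
  by_cases hi : G.IsInner (G.tgt e)
  · obtain ⟨e', h1, h2, h3⟩ := in_dich hfull F hi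
    by_cases hi' : G.IsInner (G.src e)
    · -- both inner
      rcases List.eq_nil_or_concat a with rfl | ⟨a', g, rfl⟩
      · simp only [IsP] at hpa
        subst hpa
        exact absurd (hx ▸ hu) hi'.1
      cases c with
      | nil =>
        simp only [IsP] at hpc
        exact absurd (hpc ▸ hw) hi.2
      | cons k c =>
        rw [List.concat_eq_append, isP_append] at hpa
        obtain ⟨y, -, hgy, hgx⟩ := hpa
        simp only [IsP] at hgx
        have hgi : G.IsInner (G.tgt g) := by rw [hgx, ← hx]; exact hi'
        have hki : G.IsInner (G.src k) := by rw [hpc.1]; exact hi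
        have t1 := exc_type hfull F hR (a := a') (e := g) (s := []) (f := e) (c := k :: c)
          (by simp [hac]) hgi hi'
        have t2 := exc_type hfull F hR (a := a') (e := g) (s := [e]) (f := k) (c := c)
          (by simp [hac]) hgi hki
        have t3 := exc_type hfull F hR (a := a' ++ [g]) (e := e) (s := []) (f := k) (c := c)
          (by simp [hac]) hi hki
        obtain ⟨g', -, -, q⟩ := in_dich hfull F hgi
        obtain ⟨k', -, -, q'⟩ := out_dich hfull F hki
        tauto
    · tauto
  · by_cases hi' : G.IsInner (G.src e)
    · obtain ⟨e', h1, h2, h3⟩ := out_dich hfull F hi'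
      tauto
    · tauto

lemma weight_cases (F : G.Framing) (e : G.E) : G.weight F e = 1 ∨ G.weight F e = 2 := by
  unfold weight; split_ifs <;> simp

/-- The facts about weights extracted from fullness and ampleness. -/
structure Good (F : G.Framing) : Prop where
  in_ex : ∀ v, G.IsInner v → ∀ i, i = 1 ∨ i = 2 → ∃ e, G.tgt e = v ∧ G.weight F e = i
  in_un : ∀ e f, G.IsInner (G.tgt e) → G.tgt e = G.tgt f → G.weight F e = G.weight F f → e = f
  out_ex : ∀ v, G.IsInner v → ∀ i, i = 1 ∨ i = 2 → ∃ e, G.src e = v ∧ G.weight F e = i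
  out_un : ∀ e f, G.IsInner (G.src e) → G.src e = G.src f → G.weight F e = G.weight F f → e = f
  exc : ∀ R : G.Route, G.Exceptional F R ↔ ∃ i, ∀ e ∈ R.edges, G.weight F e = i

lemma weight_in (hfull : G.Full) (F : G.Framing) (hample : G.Ample F) {e : G.E}
    (hi : G.IsInner (G.tgt e)) : (G.weight F e = 1 ↔ G.MinIn F e) ∧ (G.weight F e = 2 ↔ G.MaxIn F e) := by
  obtain ⟨e', -, -, h⟩ := in_dich hfull F hi
  have := good_edge hfull F hample e
  unfold weight
  split_ifs <;> simp <;> tauto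

lemma weight_out (hfull : G.Full) (F : G.Framing) (hample : G.Ample F) {e : G.E}
    (hi : G.IsInner (G.src e)) : (G.weight F e = 1 ↔ G.MinOut F e) ∧ (G.weight F e = 2 ↔ G.MaxOut F e) := by
  obtain ⟨e', -, -, h⟩ := out_dich hfull F hi
  have := good_edge hfull F hample e
  unfold weight
  split_ifs <;> simp <;> tauto

lemma exc_of_const (hfull : G.Full) (F : G.Framing) (hample : G.Ample F) (R : G.Route) (i : ℕ)
    (h : ∀ e ∈ R.edges, G.weight F e = i) : G.Exceptional F R := by
  have noin : ∀ e f, F.inlt e f → G.weight F e = 1 ∧ G.weight F f = 2 := by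
    intro e f hef
    have hi := F.inlt_inner hef
    have ht := F.inlt_tgt hef
    have hi' := hi
    rw [ht] at hi'
    have w1 := weight_in hfull F hample hi
    have w2 := weight_in hfull F hample hi'
    have hne : e ≠ f := by rintro rfl; exact F.inlt_irrefl _ hef
    have n1 : ¬ G.MaxIn F e := fun hm =>
      F.inlt_irrefl _ (F.inlt_trans hef (hm f ht.symm hne.symm))
    have n2 : ¬ G.MinIn F f := fun hm =>
      F.inlt_irrefl _ (F.inlt_trans hef (hm e ht hne))
    have := weight_cases F e
    have := weight_cases F f
    tauto
  have noout : ∀ e f, F.outlt e f → G.weight F e = 1 ∧ G.weight F f = 2 := by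
    intro e f hef
    have hi := F.outlt_inner hef
    have ht := F.outlt_src hef
    have hi' := hi
    rw [ht] at hi'
    have w1 := weight_out hfull F hample hi
    have w2 := weight_out hfull F hample hi'
    have hne : e ≠ f := by rintro rfl; exact F.outlt_irrefl _ hef
    have n1 : ¬ G.MaxOut F e := fun hm =>
      F.outlt_irrefl _ (F.outlt_trans hef (hm f ht.symm hne.symm))
    have n2 : ¬ G.MinOut F f := fun hm =>
      F.outlt_irrefl _ (F.outlt_trans hef (hm e ht hne))
    have := weight_cases F e
    have := weight_cases F f
    tauto
  intro S
  constructor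
  · rintro ⟨v, a, b, c, d, ea, ec, h1, h2, -, -, -, -, ⟨p, q, s, e, f, -, h3, h4, h5⟩,
      ⟨s', p', q', e', f', -, h3', h4', h5'⟩⟩
    have k1 := h e (by rw [h1, h3]; simp)
    have k2 := h f' (by rw [h1, h4']; simp)
    have := noin _ _ h5
    have := noout _ _ h5'
    omega
  · rintro ⟨v, a, b, c, d, ea, ec, h1, h2, -, -, -, -, ⟨p, q, s, e, f, -, h3, h4, h5⟩,
      ⟨s', p', q', e', f', -, h3', h4', h5'⟩⟩
    have k1 := h f (by rw [h2, h4]; simp)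
    have k2 := h e' (by rw [h2, h3']; simp)
    have := noin _ _ h5
    have := noout _ _ h5'
    omega

lemma const_of_exc (hfull : G.Full) (F : G.Framing) (hample : G.Ample F) (R : G.Route)
    (hR : G.Exceptional F R) : ∃ i, ∀ e ∈ R.edges, G.weight F e = i := by
  have key : ∀ l a, R.edges = a ++ l → ∃ i, ∀ e ∈ l, G.weight F e = i := by
    intro l
    induction l with
    | nil => intro a _; exact ⟨0, by simp⟩
    | cons e l ih =>
      intro a ha
      obtain ⟨i, hi⟩ := ih (a ++ [e]) (by simp [ha])
      cases l with
      | nil => exact ⟨_, by simp; rfl⟩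
      | cons f l =>
        refine ⟨i, ?_⟩
        obtain ⟨u, w, hp, -, -⟩ := route_path R
        rw [ha, isP_append] at hp
        obtain ⟨x, -, -, hf, -⟩ := hp
        have hi1 : G.IsInner (G.tgt e) := inner_of hf.symm
        have hi2 : G.IsInner (G.src f) := by rw [hf]; exact hi1
        have := exc_type hfull F hR (a := a) (e := e) (s := []) (f := f) (c := l)
          (by simp [ha]) hi1 hi2
        have w1 := weight_in hfull F hample hi1
        have w2 := weight_out hfull F hample hi2
        have w3 : G.weight F e = G.weight F f := by
          rcases this with h | h
          · rw [w1.1.2 h.1, w2.1.2 h.2]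
          · rw [w1.2.2 h.1, w2.2.2 h.2]
        intro k hk
        rcases List.mem_cons.1 hk with rfl | hk
        · rw [w3]; exact hi f (by simp)
        · exact hi k hk
  exact key _ [] rfl

lemma good (hfull : G.Full) (F : G.Framing) (hample : G.Ample F) : Good F where
  in_ex v hv i hi := by
    obtain ⟨e, he⟩ : ∃ e, G.tgt e = v := by
      by_contra h; push Not at h; exact hv.1 h
    subst he
    obtain ⟨e', h1, h2, h3⟩ := in_dich hfull F hv
    obtain ⟨e'', h1', h2', h3'⟩ := in_dich hfull F (e := e') (by rw [h2]; exact hv)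
    have w1 := weight_in hfull F hample hv
    have w2 := weight_in hfull F hample (e := e') (by rw [h2]; exact hv)
    have m : ∀ m : G.MinIn F e', ¬ F.inlt e e' := fun m hlt =>
      F.inlt_irrefl _ (F.inlt_trans hlt (m e h2.symm h1.symm))
    have m' : ∀ m : G.MaxIn F e', ¬ F.inlt e' e := fun m hlt =>
      F.inlt_irrefl _ (F.inlt_trans hlt (m e h2.symm h1.symm))
    have : G.weight F e = i ∨ G.weight F e' = i := by
      rcases hi with rfl | rfl <;> tauto
    rcases this with h | h
    · exact ⟨e, rfl, h⟩
    · exact ⟨e', h2, h⟩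
  in_un e f hi hef hw := by
    by_contra hne
    have hi' := hi
    rw [hef] at hi'
    have w1 := weight_in hfull F hample hi
    have w2 := weight_in hfull F hample hi'
    rcases weight_cases F e with h | h
    · exact F.inlt_irrefl _ (F.inlt_trans (w1.1.1 h f hef.symm (Ne.symm hne)) (w2.1.1 (hw ▸ h) e hef hne))
    · exact F.inlt_irrefl _ (F.inlt_trans (w1.2.1 h f hef.symm (Ne.symm hne)) (w2.2.1 (hw ▸ h) e hef hne))
  out_ex v hv i hi := by
    obtain ⟨e, he⟩ : ∃ e, G.src e = v := by
      by_contra h; push Not at h; exact hv.2 h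
    subst he
    obtain ⟨e', h1, h2, h3⟩ := out_dich hfull F hv
    obtain ⟨e'', h1', h2', h3'⟩ := out_dich hfull F (e := e') (by rw [h2]; exact hv)
    have w1 := weight_out hfull F hample hv
    have w2 := weight_out hfull F hample (e := e') (by rw [h2]; exact hv)
    have m : ∀ m : G.MinOut F e', ¬ F.outlt e e' := fun m hlt =>
      F.outlt_irrefl _ (F.outlt_trans hlt (m e h2.symm h1.symm))
    have m' : ∀ m : G.MaxOut F e', ¬ F.outlt e' e := fun m hlt =>
      F.outlt_irrefl _ (F.outlt_trans hlt (m e h2.symm h1.symm))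
    have : G.weight F e = i ∨ G.weight F e' = i := by
      rcases hi with rfl | rfl <;> tauto
    rcases this with h | h
    · exact ⟨e, rfl, h⟩
    · exact ⟨e', h2, h⟩
  out_un e f hi hef hw := by
    by_contra hne
    have hi' := hi
    rw [hef] at hi'
    have w1 := weight_out hfull F hample hi
    have w2 := weight_out hfull F hample hi'
    rcases weight_cases F e with h | h
    · exact F.outlt_irrefl _ (F.outlt_trans (w1.1.1 h f hef.symm (Ne.symm hne)) (w2.1.1 (hw ▸ h) e hef hne))
    · exact F.outlt_irrefl _ (F.outlt_trans (w1.2.1 h f hef.symm (Ne.symm hne)) (w2.2.1 (hw ▸ h) e hef hne))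
  exc R := ⟨const_of_exc hfull F hample R, fun ⟨i, h⟩ => exc_of_const hfull F hample R i h⟩

end dag
end Aux
end DAG


namespace DAG
namespace Aux
variable {G : DAG}

/-- A path of inner vertices starting at `v`. -/
def SP (v : G.V) (l : List G.E) : Prop :=
  (∃ w, IsP G.src G.tgt v l w) ∧ ∀ e ∈ l, G.IsInner (G.tgt e)

/-- Strings of the gentle algebra: directed paths of inner vertices. -/
def Str (G : DAG) : Type := {p : G.InnerV × List G.E // SP p.1.1 p.2}

/-- The relation between strings / inner vertices and routes. -/
def Rel (F : G.Framing) : Str G ⊕ G.InnerV → G.Route → Prop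
  | Sum.inl S, R => ∃ b e2 e1 f, R.edges = b ++ e2 :: (S.1.2 ++ e1 :: f) ∧
      (∀ x ∈ b, G.weight F x = 1) ∧ G.weight F e2 = 2 ∧ G.weight F e1 = 1 ∧
      (∀ x ∈ f, G.weight F x = 2) ∧ G.tgt e2 = S.1.1.1
  | Sum.inr v, R => ∃ b e1 e2 f, R.edges = (b ++ [e1]) ++ e2 :: f ∧
      (∀ x ∈ b ++ [e1], G.weight F x = 1) ∧ G.weight F e2 = 2 ∧
      (∀ x ∈ f, G.weight F x = 2) ∧ G.tgt e1 = v.1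

lemma fwd_wt_ex {F : G.Framing} (hG : Good F) (i : ℕ) (hi : i = 1 ∨ i = 2) (e : G.E) :
    ∃ l w, IsP G.src G.tgt (G.tgt e) l w ∧ G.IsSink w ∧ ∀ x ∈ l, G.weight F x = i := by
  obtain ⟨rk, hrk⟩ := exists_crk G
  exact fwd_exists rk hrk (fun x => G.weight F x = i)
    (fun v h1 h2 => hG.out_ex v (tgt_inner h1 h2) i hi) (G.tgt e) ⟨e, rfl⟩

lemma bwd_wt_ex {F : G.Framing} (hG : Good F) (i : ℕ) (hi : i = 1 ∨ i = 2) (e : G.E) :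
    ∃ l u, IsP G.src G.tgt u l (G.src e) ∧ G.IsSource u ∧ ∀ x ∈ l, G.weight F x = i := by
  obtain ⟨rk, hrk⟩ := exists_rk G
  obtain ⟨l, w, h1, h2, h3⟩ := fwd_exists (s := G.tgt) (t := G.src) rk hrk
    (fun x => G.weight F x = i)
    (fun v h1 h2 => hG.in_ex v (tgt_inner h2 h1) i hi) (G.src e) ⟨e, rfl⟩
  exact ⟨l.reverse, w, isP_reverse h1, h2, by simpa using h3⟩

lemma fwd_wt_un {F : G.Framing} (hG : Good F) (i : ℕ) {e : G.E} {l l' : List G.E} {w w' : G.V}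
    (h : IsP G.src G.tgt (G.tgt e) l w) (h' : IsP G.src G.tgt (G.tgt e) l' w')
    (hw : G.IsSink w) (hw' : G.IsSink w')
    (hl : ∀ x ∈ l, G.weight F x = i) (hl' : ∀ x ∈ l', G.weight F x = i) : l = l' :=
  fwd_unique (fun x => G.weight F x = i)
    (fun a b hg hab ha hb => hG.out_un a b (tgt_inner hg ⟨a, rfl⟩) hab (ha.trans hb.symm))
    ⟨e, rfl⟩ h h' hw hw' hl hl'

lemma bwd_wt_un {F : G.Framing} (hG : Good F) (i : ℕ) {e : G.E} {l l' : List G.E} {w w' : G.V}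
    (h : IsP G.src G.tgt w l (G.src e)) (h' : IsP G.src G.tgt w' l' (G.src e))
    (hw : G.IsSource w) (hw' : G.IsSource w')
    (hl : ∀ x ∈ l, G.weight F x = i) (hl' : ∀ x ∈ l', G.weight F x = i) : l = l' := by
  have := fwd_unique (s := G.tgt) (t := G.src) (fun x => G.weight F x = i)
    (fun a b hg hab ha hb => hG.in_un a b (tgt_inner ⟨a, rfl⟩ hg) hab (ha.trans hb.symm))
    ⟨e, rfl⟩ (isP_reverse h) (isP_reverse h') hw hw' (by simpa using hl) (by simpa using hl')
  simpa using this

lemma sp_end_inner (S : Str G) {w : G.V} (h : IsP G.src G.tgt S.1.1.1 S.1.2 w) : G.IsInner w := by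
  rcases isP_end h with h1 | ⟨e, he, h1⟩
  · rw [← h1]; exact S.1.1.2
  · rw [← h1]; exact S.2.2 e he

lemma rel_ex {F : G.Framing} (hG : Good F) (t : Str G ⊕ G.InnerV) : ∃ R, Rel F t R := by
  cases t with
  | inl S =>
    obtain ⟨w, hw⟩ := S.2.1
    obtain ⟨e2, h2, h2'⟩ := hG.in_ex S.1.1.1 S.1.1.2 2 (Or.inr rfl)
    obtain ⟨e1, h1, h1'⟩ := hG.out_ex w (sp_end_inner S hw) 1 (Or.inl rfl)
    obtain ⟨b, u, hb, hu, hb'⟩ := bwd_wt_ex hG 1 (Or.inl rfl) e2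
    obtain ⟨f, z, hf, hz, hf'⟩ := fwd_wt_ex hG 2 (Or.inr rfl) e1
    obtain ⟨R, hR⟩ := mk_route (l := b ++ e2 :: (S.1.2 ++ e1 :: f)) (u := u) (w := z) (by simp)
      (isP_append.2 ⟨_, hb, rfl, isP_append.2 ⟨w, by rw [h2]; exact hw, h1, hf⟩⟩) hu hz
    exact ⟨R, b, e2, e1, f, hR, hb', h2', h1', hf', h2⟩
  | inr v =>
    obtain ⟨e1, h1, h1'⟩ := hG.in_ex v.1 v.2 1 (Or.inl rfl)
    obtain ⟨e2, h2, h2'⟩ := hG.out_ex v.1 v.2 2 (Or.inr rfl)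
    obtain ⟨b, u, hb, hu, hb'⟩ := bwd_wt_ex hG 1 (Or.inl rfl) e1
    obtain ⟨f, z, hf, hz, hf'⟩ := fwd_wt_ex hG 2 (Or.inr rfl) e2
    obtain ⟨R, hR⟩ := mk_route (l := (b ++ [e1]) ++ e2 :: f) (u := u) (w := z) (by simp)
      (isP_append.2 ⟨v.1, isP_append.2 ⟨_, hb, rfl, h1⟩, h2, hf⟩) hu hz
    refine ⟨R, b, e1, e2, f, hR, ?_, h2', hf', h1⟩
    intro x hx
    rcases List.mem_append.1 hx with hx | hx
    · exact hb' x hx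
    · rw [List.mem_singleton.1 hx]; exact h1'

lemma rel_un {F : G.Framing} (hG : Good F) (t : Str G ⊕ G.InnerV) {R R' : G.Route}
    (h : Rel F t R) (h' : Rel F t R') : R = R' := by
  apply route_ext
  obtain ⟨u, w, hp, hu, hw⟩ := route_path R
  obtain ⟨u', w', hp', hu', hw'⟩ := route_path R'
  cases t with
  | inl S =>
    obtain ⟨b, e2, e1, f, hR, hb, h2, h1, hf, hv⟩ := h
    obtain ⟨b', e2', e1', f', hR', hb', h2', h1', hf', hv'⟩ := h'
    rw [hR, isP_append] at hp
    rw [hR', isP_append] at hp'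
    rw [hR, hR']
    obtain rfl : e2 = e2' := hG.in_un _ _ (by rw [hv]; exact S.1.1.2) (hv.trans hv'.symm)
      (h2.trans h2'.symm)
    obtain ⟨x, hx, hx2, hp⟩ := hp
    obtain ⟨x', hx', hx2', hp'⟩ := hp'
    subst hx2
    subst hx2'
    obtain rfl := bwd_wt_un hG 1 hx hx' hu hu' hb hb'
    rw [isP_append] at hp hp'
    obtain ⟨y, hy, hy1, hp⟩ := hp
    obtain ⟨y', hy', hy1', hp'⟩ := hp'
    obtain rfl := isP_end_unique hy hy'
    obtain rfl : e1 = e1' := hG.out_un _ _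
      (by rw [hy1]; exact sp_end_inner S (by rw [← hv]; exact hy))
      (hy1.trans hy1'.symm) (h1.trans h1'.symm)
    obtain rfl := fwd_wt_un hG 2 hp hp' hw hw' hf hf'
    rfl
  | inr v =>
    obtain ⟨b, e1, e2, f, hR, hb, h2, hf, hv⟩ := h
    obtain ⟨b', e1', e2', f', hR', hb', h2', hf', hv'⟩ := h'
    rw [hR, isP_append, ] at hp
    rw [hR', isP_append] at hp'
    rw [hR, hR']
    obtain ⟨x, hx, hx2, hp⟩ := hp
    obtain ⟨x', hx', hx2', hp'⟩ := hp'
    rw [isP_append] at hx hx'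
    obtain ⟨y, hy, hy1, hx⟩ := hx
    obtain ⟨y', hy', hy1', hx'⟩ := hx'
    simp only [IsP] at hx hx'
    obtain rfl : e1 = e1' := hG.in_un _ _ (by rw [hv]; exact v.2) (hv.trans hv'.symm)
      ((hb e1 (by simp)).trans (hb' e1' (by simp)).symm)
    subst hy1
    subst hy1'
    obtain rfl := bwd_wt_un hG 1 hy hy' hu hu' (fun z hz => hb z (by simp [hz]))
      (fun z hz => hb' z (by simp [hz]))
    have hs : G.src e2 = v.1 := by rw [hx2, ← hx, hv]
    have hs' : G.src e2' = v.1 := by rw [hx2', ← hx', hv]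
    obtain rfl : e2 = e2' := hG.out_un _ _ (by rw [hs]; exact v.2) (hs.trans hs'.symm)
      (h2.trans h2'.symm)
    obtain rfl := fwd_wt_un hG 2 hp hp' hw hw' hf hf'
    rfl

lemma rel_nonexc {F : G.Framing} (hG : Good F) (t : Str G ⊕ G.InnerV) {R : G.Route}
    (h : Rel F t R) : ¬ G.Exceptional F R := by
  rw [hG.exc]
  rintro ⟨i, hi⟩
  cases t with
  | inl S =>
    obtain ⟨b, e2, e1, f, hR, hb, h2, h1, hf, hv⟩ := h
    have k1 := hi e1 (by simp [hR])
    have k2 := hi e2 (by simp [hR])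
    omega
  | inr v =>
    obtain ⟨b, e1, e2, f, hR, hb, h2, hf, hv⟩ := h
    have k1 := hi e1 (by simp [hR])
    have k2 := hi e2 (by simp [hR])
    have := hb e1 (by simp)
    omega

lemma rel_surj {F : G.Framing} (hG : Good F) {R : G.Route}
    (h : ¬ G.Exceptional F R) : ∃ t, Rel F t R := by
  rw [hG.exc] at h
  push Not at h
  obtain ⟨b, e2, m, hR, hb, h2⟩ := exists_first (fun x => G.weight F x = 1) R.edges (h 1)
  have h2' : G.weight F e2 = 2 := (weight_cases F e2).resolve_left h2
  obtain ⟨u, w, hp, hu, hw⟩ := route_path R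
  rw [hR, isP_append] at hp
  obtain ⟨x, hx, hx2, hp⟩ := hp
  by_cases hm : ∃ x ∈ m, ¬ G.weight F x = 2
  · obtain ⟨S, e1, f, hm', hf, h1⟩ := exists_last (fun x => G.weight F x = 2) m hm
    have h1' : G.weight F e1 = 1 := (weight_cases F e1).resolve_right h1
    rw [hm', isP_append] at hp
    obtain ⟨y, hy, hy1, hp⟩ := hp
    have hI : G.IsInner (G.tgt e2) := by
      refine tgt_inner ⟨e2, rfl⟩ ?_
      cases S with
      | nil => exact ⟨e1, hy1.trans (show _ = _ from hy).symm⟩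
      | cons k S => exact ⟨k, hy.1⟩
    have hSI : ∀ e ∈ S, G.IsInner (G.tgt e) := by
      intro e he
      obtain ⟨S1, S2, rfl⟩ := List.append_of_mem he
      rw [isP_append] at hy
      obtain ⟨z, -, -, hz⟩ := hy
      refine tgt_inner ⟨e, rfl⟩ ?_
      cases S2 with
      | nil => exact ⟨e1, hy1.trans (show _ = _ from hz).symm⟩
      | cons k S2 => exact ⟨k, hz.1⟩
    refine ⟨Sum.inl ⟨(⟨G.tgt e2, hI⟩, S), ⟨y, hy⟩, hSI⟩, b, e2, e1, f, ?_, hb, h2', h1', hf, rfl⟩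
    rw [hR, hm']
  · push Not at hm
    rcases List.eq_nil_or_concat b with rfl | ⟨b', e1, rfl⟩
    · exfalso
      obtain ⟨k, hk, hk'⟩ := h 2
      rw [hR] at hk
      rcases List.mem_cons.1 hk with rfl | hk
      · exact hk' h2'
      · exact hk' (hm k hk)
    · rw [List.concat_eq_append] at hR hb hx
      rw [isP_append] at hx
      obtain ⟨y, -, -, hx⟩ := hx
      simp only [IsP] at hx
      exact ⟨Sum.inr ⟨G.tgt e1, inner_of (hx.trans hx2.symm)⟩, b', e1, e2, m, hR, hb, h2', hm, rfl⟩

lemma rel_inj {F : G.Framing} {t t' : Str G ⊕ G.InnerV} {R : G.Route}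
    (h : Rel F t R) (h' : Rel F t' R) : t = t' := by
  have ne12 : ∀ e, G.weight F e = 2 → ¬ G.weight F e = 1 := fun e h => by omega
  have ne21 : ∀ e, G.weight F e = 1 → ¬ G.weight F e = 2 := fun e h => by omega
  cases t with
  | inl S =>
    obtain ⟨b, e2, e1, f, hR, hb, h2, h1, hf, hv⟩ := h
    cases t' with
    | inl S' =>
      obtain ⟨b', e2', e1', f', hR', hb', h2', h1', hf', hv'⟩ := h'
      obtain ⟨-, rfl, h3⟩ := split_first (p := fun x => G.weight F x = 1) (hR.symm.trans hR') hb hb'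
        (ne12 _ h2) (ne12 _ h2')
      obtain ⟨h4, -, -⟩ := split_last (p := fun x => G.weight F x = 2) h3 hf hf'
        (ne21 _ h1) (ne21 _ h1')
      congr 1
      exact Subtype.ext (Prod.ext (Subtype.ext (hv.symm.trans hv')) h4)
    | inr v =>
      exfalso
      obtain ⟨b', e1', e2', f', hR', hb', h2', hf', hv'⟩ := h'
      obtain ⟨-, rfl, h3⟩ := split_first (p := fun x => G.weight F x = 1) (hR.symm.trans hR') hb hb'
        (ne12 _ h2) (ne12 _ h2')
      exact ne21 _ h1 (hf' e1 (by rw [← h3]; simp))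
  | inr v =>
    obtain ⟨b, e1, e2, f, hR, hb, h2, hf, hv⟩ := h
    cases t' with
    | inl S' =>
      exfalso
      obtain ⟨b', e2', e1', f', hR', hb', h2', h1', hf', hv'⟩ := h'
      obtain ⟨-, rfl, h3⟩ := split_first (p := fun x => G.weight F x = 1) (hR.symm.trans hR') hb hb'
        (ne12 _ h2) (ne12 _ h2')
      exact ne21 _ h1' (hf e1' (by rw [h3]; simp))
    | inr v' =>
      obtain ⟨b', e1', e2', f', hR', hb', h2', hf', hv'⟩ := h'
      obtain ⟨h3, -, -⟩ := split_first (p := fun x => G.weight F x = 1) (hR.symm.trans hR') hb hb'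
        (ne12 _ h2) (ne12 _ h2')
      have h4 : e1 = e1' := by
        have := congrArg List.reverse h3
        simp only [List.reverse_append, List.reverse_cons, List.reverse_nil, List.nil_append,
          List.singleton_append, List.cons.injEq] at this
        exact this.1
      congr 1
      exact Subtype.ext (by rw [← hv, ← hv', h4])

lemma routes_equiv {F : G.Framing} (hG : Good F) :
    Nonempty ({R : G.Route // ¬ G.Exceptional F R} ≃ Str G ⊕ G.InnerV) := by
  choose g hg using rel_ex hG
  refine ⟨(Equiv.ofBijective
    (fun t => (⟨g t, rel_nonexc hG t (hg t)⟩ : {R : G.Route // ¬ G.Exceptional F R})) ⟨?_, ?_⟩).symm⟩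
  · intro t t' h
    have h1 : g t = g t' := congrArg Subtype.val h
    exact rel_inj (hg t) (h1 ▸ hg t')
  · rintro ⟨R, hR⟩
    obtain ⟨t, ht⟩ := rel_surj hG hR
    exact ⟨t, Subtype.ext (rel_un hG t (hg t) ht)⟩

end Aux
end DAG


namespace DAG
namespace Aux
variable {G : DAG}

/-- `u` lies on the path `l` starting at `v`. -/
def On (v : G.V) (l : List G.E) (u : G.V) : Prop := u = v ∨ ∃ e ∈ l, G.tgt e = u

lemma innerV_ext {u v : G.InnerV} (h : u.1 = v.1) : u = v := Subtype.ext h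

lemma innerV_ne {u v : G.InnerV} (h : u.1 ≠ v.1) : u ≠ v := fun e => h (e ▸ rfl)

section arrows
variable (F : G.Framing) (e : G.E) (hs : G.IsInner (G.src e)) (ht : G.IsInner (G.tgt e))

lemma aS1 (h : G.weight F e = 1) : (G.arrowSrc F e hs ht).1 = G.src e := by
  exact congrArg (fun u : G.InnerV => u.1) (if_pos h)
lemma aT1 (h : G.weight F e = 1) : (G.arrowTgt F e hs ht).1 = G.tgt e := by
  exact congrArg (fun u : G.InnerV => u.1) (if_pos h)
lemma aS2 (h : G.weight F e = 2) : (G.arrowSrc F e hs ht).1 = G.tgt e := by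
  exact congrArg (fun u : G.InnerV => u.1) (if_neg (by omega))
lemma aT2 (h : G.weight F e = 2) : (G.arrowTgt F e hs ht).1 = G.src e := by
  exact congrArg (fun u : G.InnerV => u.1) (if_neg (by omega))

lemma aS_or : (G.arrowSrc F e hs ht).1 = G.src e ∨ (G.arrowSrc F e hs ht).1 = G.tgt e := by
  rcases weight_cases F e with h | h
  · exact Or.inl (aS1 F e hs ht h)
  · exact Or.inr (aS2 F e hs ht h)

lemma aT_or : (G.arrowTgt F e hs ht).1 = G.src e ∨ (G.arrowTgt F e hs ht).1 = G.tgt e := by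
  rcases weight_cases F e with h | h
  · exact Or.inr (aT1 F e hs ht h)
  · exact Or.inl (aT2 F e hs ht h)

end arrows

section fam
variable {F : G.Framing} {K : Type} [Field K]

lemma cast_fam (M : G.Rep F K) (x : ∀ u, M.space u) {p q : G.InnerV} (h : p = q) :
    cast (congrArg M.space h) (x p) = x q := by
  subst h; rfl

lemma cast_dual (M : G.Rep F K) (ξ : ∀ u, Module.Dual K (M.space u)) {p q : G.InnerV} (h : p = q)
    (y : M.space p) : ξ p y = ξ q (cast (congrArg M.space h) y) := by
  subst h; rfl

lemma z1 (M : G.Rep F K) (x : ∀ u, M.space u) (g e : G.E)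
    (hsg : G.IsInner (G.src g)) (htg : G.IsInner (G.tgt g))
    (hs : G.IsInner (G.src e)) (ht : G.IsInner (G.tgt e))
    (h : (G.arrowTgt F g hsg htg).1 = (G.arrowSrc F e hs ht).1)
    (hw : G.weight F g ≠ G.weight F e)
    (hl : M.map g hsg htg (x (G.arrowSrc F g hsg htg)) = x (G.arrowTgt F g hsg htg)) :
    M.map e hs ht (x (G.arrowSrc F e hs ht)) = 0 := by
  have := M.rel g e hsg htg hs ht (innerV_ext h) hw (x (G.arrowSrc F g hsg htg))
  rwa [hl, cast_fam M x (innerV_ext h)] at this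

lemma z2 (M : G.Rep F K) (ξ : ∀ u, Module.Dual K (M.space u)) (g e : G.E)
    (hsg : G.IsInner (G.src g)) (htg : G.IsInner (G.tgt g))
    (hs : G.IsInner (G.src e)) (ht : G.IsInner (G.tgt e))
    (h : (G.arrowTgt F e hs ht).1 = (G.arrowSrc F g hsg htg).1)
    (hw : G.weight F e ≠ G.weight F g)
    (hl : ∀ m, ξ (G.arrowTgt F g hsg htg) (M.map g hsg htg m) = ξ (G.arrowSrc F g hsg htg) m)
    (m : M.space (G.arrowSrc F e hs ht)) :
    ξ (G.arrowTgt F e hs ht) (M.map e hs ht m) = 0 := by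
  rw [cast_dual M ξ (innerV_ext h), ← hl, M.rel e g hs ht hsg htg (innerV_ext h) hw, map_zero]

/-- A pair of compatible families of vectors and functionals along a path, regardless of
what happens at edges entering the start. -/
structure Fam (M : G.Rep F K) (v : G.InnerV) (r : List G.E) (x : ∀ u, M.space u)
    (ξ : ∀ u, Module.Dual K (M.space u)) : Prop where
  sp : SP v.1 r
  sx : ∀ u : G.InnerV, ¬ On v.1 r u.1 → x u = 0
  sξ : ∀ u : G.InnerV, ¬ On v.1 r u.1 → ξ u = 0
  hx : ∀ e hs ht, G.tgt e ≠ v.1 → M.map e hs ht (x (G.arrowSrc F e hs ht)) =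
    if e ∈ r then x (G.arrowTgt F e hs ht) else 0
  hξ : ∀ e hs ht, G.tgt e ≠ v.1 → ∀ m, ξ (G.arrowTgt F e hs ht) (M.map e hs ht m) =
    if e ∈ r then ξ (G.arrowSrc F e hs ht) m else 0
  one : ξ v (x v) = 1

lemma fam_cons (hG : Good F) (M : G.Rep F K) {v w : G.InnerV} {r : List G.E}
    {x' : ∀ u, M.space u} {ξ' : ∀ u, Module.Dual K (M.space u)} (hF : Fam M w r x' ξ')
    {g : G.E} (hsg : G.IsInner (G.src g)) (htg : G.IsInner (G.tgt g))
    (hv : G.src g = v.1) (hw : G.tgt g = w.1)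
    {x : ∀ u, M.space u} {ξ : ∀ u, Module.Dual K (M.space u)}
    (hxx : ∀ u : G.InnerV, u.1 ≠ v.1 → x u = x' u)
    (hξξ : ∀ u : G.InnerV, u.1 ≠ v.1 → ξ u = ξ' u)
    (hlx : M.map g hsg htg (x (G.arrowSrc F g hsg htg)) = x (G.arrowTgt F g hsg htg))
    (hlξ : ∀ m, ξ (G.arrowTgt F g hsg htg) (M.map g hsg htg m) = ξ (G.arrowSrc F g hsg htg) m) :
    Fam M v (g :: r) x ξ := by
  obtain ⟨rk, hrk⟩ := exists_rk G
  obtain ⟨⟨z, hz⟩, hin⟩ := hF.sp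
  have hvw : rk v.1 < rk w.1 := by rw [← hv, ← hw]; exact hrk g
  have hne : w.1 ≠ v.1 := fun h => by rw [h] at hvw; omega
  have hr1 : ∀ e ∈ r, rk w.1 ≤ rk (G.src e) := isP_rk rk hrk hz
  have sx : ∀ u : G.InnerV, ¬ On v.1 (g :: r) u.1 → x u = 0 := by
    intro u hu
    rw [hxx u (fun h => hu (Or.inl h))]
    apply hF.sx
    rintro (h | ⟨e, he, h⟩)
    · exact hu (Or.inr ⟨g, by simp, by rw [hw, h]⟩)
    · exact hu (Or.inr ⟨e, by simp [he], h⟩)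
  have sξ : ∀ u : G.InnerV, ¬ On v.1 (g :: r) u.1 → ξ u = 0 := by
    intro u hu
    rw [hξξ u (fun h => hu (Or.inl h))]
    apply hF.sξ
    rintro (h | ⟨e, he, h⟩)
    · exact hu (Or.inr ⟨g, by simp, by rw [hw, h]⟩)
    · exact hu (Or.inr ⟨e, by simp [he], h⟩)
  have hrkOn : ∀ e, G.tgt e = w.1 → G.src e ≠ v.1 → ¬ On v.1 (g :: r) (G.src e) := by
    intro e he1 he2
    have h0 := hrk e
    rw [he1] at h0
    rintro (h | ⟨k, hk, h⟩)
    · exact he2 h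
    · rcases List.mem_cons.1 hk with rfl | hk
      · rw [← h, hw] at h0; omega
      · have h1 := hr1 k hk
        have h2 := hrk k
        rw [h] at h2
        omega
  have nr1 : ∀ e, G.src e = v.1 → e ∉ r := by
    intro e he hm
    have := hr1 e hm
    rw [he] at this
    omega
  have nr2 : ∀ e, G.tgt e = w.1 → e ∉ r := by
    intro e he hm
    have := hr1 e hm
    have h2 := hrk e
    rw [he] at h2
    omega
  have wv : ∀ e, G.src e = v.1 → e ≠ g → G.weight F g ≠ G.weight F e := fun e he hne h =>
    hne (hG.out_un e g (by rw [he]; exact v.2) (he.trans hv.symm) h.symm)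
  have ww : ∀ e, G.tgt e = w.1 → e ≠ g → G.weight F g ≠ G.weight F e := fun e he hne h =>
    hne (hG.in_un e g (by rw [he]; exact w.2) (he.trans hw.symm) h.symm)
  refine ⟨⟨⟨z, hv, by rw [hw]; exact hz⟩, ?_⟩, sx, sξ, ?_, ?_, ?_⟩
  · intro e he
    rcases List.mem_cons.1 he with rfl | he
    · exact htg
    · exact hin e he
  · intro e hs ht htv
    by_cases heg : e = g
    · subst heg
      rw [if_pos (by simp), hlx]
    by_cases hsv : G.src e = v.1
    · have hwt := wv e hsv heg
      rw [if_neg (by simp [heg, nr1 e hsv])]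
      rcases weight_cases F g with h1 | h1
      · have h2 : G.weight F e = 2 := (weight_cases F e).resolve_left (by omega)
        by_cases htw : G.tgt e = w.1
        · exact z1 M x g e hsg htg hs ht (by rw [aT1 F g hsg htg h1, aS2 F e hs ht h2, hw, htw])
            hwt hlx
        · rw [hxx _ (by rw [aS2 F e hs ht h2]; exact htv), hF.hx e hs ht htw,
            if_neg (nr1 e hsv)]
      · have h2 : G.weight F e = 1 := (weight_cases F e).resolve_right (by omega)
        exact z1 M x g e hsg htg hs ht (by rw [aT2 F g hsg htg h1, aS1 F e hs ht h2, hv, hsv])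
            hwt hlx
    by_cases htw : G.tgt e = w.1
    · have hwt := ww e htw heg
      rw [if_neg (by simp [heg, nr2 e htw])]
      rcases weight_cases F g with h1 | h1
      · have h2 : G.weight F e = 2 := (weight_cases F e).resolve_left (by omega)
        exact z1 M x g e hsg htg hs ht (by rw [aT1 F g hsg htg h1, aS2 F e hs ht h2, hw, htw])
            hwt hlx
      · have h2 : G.weight F e = 1 := (weight_cases F e).resolve_right (by omega)
        rw [sx _ (by rw [aS1 F e hs ht h2]; exact hrkOn e htw hsv), map_zero]
    · have k1 : (G.arrowSrc F e hs ht).1 ≠ v.1 := by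
        rcases aS_or F e hs ht with h | h <;> rw [h] <;> assumption
      have k2 : (G.arrowTgt F e hs ht).1 ≠ v.1 := by
        rcases aT_or F e hs ht with h | h <;> rw [h] <;> assumption
      rw [hxx _ k1, hxx _ k2, hF.hx e hs ht htw]
      simp [heg]
  · intro e hs ht htv m
    by_cases heg : e = g
    · subst heg
      rw [if_pos (by simp), hlξ]
    by_cases hsv : G.src e = v.1
    · have hwt := wv e hsv heg
      rw [if_neg (by simp [heg, nr1 e hsv])]
      rcases weight_cases F g with h1 | h1
      · have h2 : G.weight F e = 2 := (weight_cases F e).resolve_left (by omega)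
        exact z2 M ξ g e hsg htg hs ht (by rw [aS1 F g hsg htg h1, aT2 F e hs ht h2, hv, hsv])
            hwt.symm hlξ m
      · have h2 : G.weight F e = 1 := (weight_cases F e).resolve_right (by omega)
        by_cases htw : G.tgt e = w.1
        · exact z2 M ξ g e hsg htg hs ht (by rw [aS2 F g hsg htg h1, aT1 F e hs ht h2, hw, htw])
            hwt.symm hlξ m
        · rw [hξξ _ (by rw [aT1 F e hs ht h2]; exact htv), hF.hξ e hs ht htw,
            if_neg (nr1 e hsv)]
    by_cases htw : G.tgt e = w.1
    · have hwt := ww e htw heg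
      rw [if_neg (by simp [heg, nr2 e htw])]
      rcases weight_cases F g with h1 | h1
      · have h2 : G.weight F e = 2 := (weight_cases F e).resolve_left (by omega)
        rw [sξ _ (by rw [aT2 F e hs ht h2]; exact hrkOn e htw hsv), LinearMap.zero_apply]
      · have h2 : G.weight F e = 1 := (weight_cases F e).resolve_right (by omega)
        exact z2 M ξ g e hsg htg hs ht (by rw [aS2 F g hsg htg h1, aT1 F e hs ht h2, hw, htw])
            hwt.symm hlξ m
    · have k1 : (G.arrowSrc F e hs ht).1 ≠ v.1 := by
        rcases aS_or F e hs ht with h | h <;> rw [h] <;> assumption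
      have k2 : (G.arrowTgt F e hs ht).1 ≠ v.1 := by
        rcases aT_or F e hs ht with h | h <;> rw [h] <;> assumption
      rw [hξξ _ k1, hξξ _ k2, hF.hξ e hs ht htw]
      simp [heg]
  · have key : ∀ p q : G.InnerV, p = q → ξ p (x p) = ξ q (x q) := by rintro p q rfl; rfl
    have h0 : ξ (G.arrowTgt F g hsg htg) (x (G.arrowTgt F g hsg htg)) =
        ξ (G.arrowSrc F g hsg htg) (x (G.arrowSrc F g hsg htg)) := by rw [← hlξ, hlx]
    have hw1 : ξ w (x w) = 1 := by rw [hxx w hne, hξξ w hne]; exact hF.one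
    rcases weight_cases F g with h1 | h1
    · rw [key (G.arrowTgt F g hsg htg) w (innerV_ext (by rw [aT1 F g hsg htg h1, hw])),
        key (G.arrowSrc F g hsg htg) v (innerV_ext (by rw [aS1 F g hsg htg h1, hv]))] at h0
      rw [← h0, hw1]
    · rw [key (G.arrowTgt F g hsg htg) v (innerV_ext (by rw [aT2 F g hsg htg h1, hv])),
        key (G.arrowSrc F g hsg htg) w (innerV_ext (by rw [aS2 F g hsg htg h1, hw]))] at h0
      rw [h0, hw1]

lemma la1 {A B : Type} [AddCommGroup A] [Module K A] [AddCommGroup B] [Module K B]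
    (D : A →ₗ[K] B) (W' : Submodule K B) (ξ' : Module.Dual K A)
    (h : ∀ y ∈ W'.comap D, ξ' y = 0) :
    ∃ ξ : Module.Dual K B, (∀ a, ξ (D a) = ξ' a) ∧ ∀ y ∈ W', ξ y = 0 := by
  have h1 : ξ' ∈ LinearMap.range (W'.mkQ ∘ₗ D).dualMap := by
    rw [LinearMap.range_dualMap_eq_dualAnnihilator_ker, Submodule.mem_dualAnnihilator]
    intro a ha
    apply h
    simpa using ha
  obtain ⟨η, hη⟩ := h1
  refine ⟨η ∘ₗ W'.mkQ, fun a => ?_, fun y hy => ?_⟩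
  · rw [← hη]; rfl
  · have : W'.mkQ y = 0 := by simpa using hy
    simp only [LinearMap.comp_apply, this, map_zero]

lemma la2 {B : Type} [AddCommGroup B] [Module K B] (W : Submodule K B) (y : B) (hy : y ∉ W) :
    ∃ ξ : Module.Dual K B, ξ y = 1 ∧ ∀ z ∈ W, ξ z = 0 := by
  obtain ⟨f, hf, hW⟩ := Submodule.exists_dual_map_eq_bot_of_notMem hy inferInstance
  refine ⟨(f y)⁻¹ • f, by simp [hf], fun z hz => ?_⟩
  have : f z ∈ W.map f := ⟨z, hz, rfl⟩
  rw [hW] at this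
  simp [(Submodule.mem_bot K).1 this]

lemma out_lemma (hG : Good F) (M : G.Rep F K) (crk : G.V → ℕ)
    (hcrk : ∀ e, crk (G.tgt e) < crk (G.src e)) :
    ∀ (n : ℕ) (v : G.InnerV), crk v.1 < n → ∀ W' W : Submodule K (M.space v), W' ≤ W → ¬ W ≤ W' →
      ∃ r x ξ, Fam M v r x ξ ∧ x v ∈ W ∧ ∀ y ∈ W', ξ v y = 0 := by
  classical
  intro n
  induction n with
  | zero => intro v hv; omega
  | succ n ih =>
    intro v hvn W' W hle hnle
    by_cases c1 : ∃ (g : G.E) (hs : G.IsInner (G.src g)) (ht : G.IsInner (G.tgt g))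
        (_ : G.weight F g = 2) (h : G.arrowTgt F g hs ht = v) (z : M.space (G.arrowSrc F g hs ht)),
        cast (congrArg M.space h) (M.map g hs ht z) ∈ W ∧
        cast (congrArg M.space h) (M.map g hs ht z) ∉ W'
    · obtain ⟨g, hs, ht, hw, h, z, hz1, hz2⟩ := c1
      subst h
      have hz1 : M.map g hs ht z ∈ W := hz1
      have hz2 : M.map g hs ht z ∉ W' := hz2
      have eS := aS2 F g hs ht hw
      have eT := aT2 F g hs ht hw
      have hlt := hcrk g
      rw [eT] at hvn
      have hne : G.arrowSrc F g hs ht ≠ G.arrowTgt F g hs ht := by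
        intro h
        have := congrArg Subtype.val h
        rw [eS, eT] at this
        rw [this] at hlt
        omega
      obtain ⟨r, x', ξ', hF, hxW, hξW⟩ := ih (G.arrowSrc F g hs ht) (by rw [eS]; omega)
        (W'.comap (M.map g hs ht)) (W.comap (M.map g hs ht)) (Submodule.comap_mono hle)
        (fun h => hz2 (h hz1))
      obtain ⟨ξv, hξ1, hξ2⟩ := la1 (M.map g hs ht) W' (ξ' (G.arrowSrc F g hs ht)) hξW
      refine ⟨g :: r, Function.update x' (G.arrowTgt F g hs ht) (M.map g hs ht (x' _)),
        Function.update ξ' (G.arrowTgt F g hs ht) ξv, ?_, ?_, ?_⟩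
      · refine fam_cons hG M hF hs ht eT.symm eS.symm ?_ ?_ ?_ ?_
        · intro u hu
          rw [Function.update_of_ne (innerV_ne hu)]
        · intro u hu
          rw [Function.update_of_ne (innerV_ne hu)]
        · rw [Function.update_of_ne hne, Function.update_self]
        · intro m
          rw [Function.update_of_ne hne, Function.update_self, hξ1]
      · rw [Function.update_self]; exact hxW
      · rw [Function.update_self]; exact hξ2
    by_cases c2 : ∃ y ∈ W, y ∉ W' ∧ ∀ (g : G.E) (hs : G.IsInner (G.src g))
        (ht : G.IsInner (G.tgt g)) (h : v = G.arrowSrc F g hs ht), G.weight F g = 1 →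
        M.map g hs ht (cast (congrArg M.space h) y) = 0
    · obtain ⟨y, hyW, hyW', hy⟩ := c2
      have hD : ∃ D : Submodule K (M.space v), (D ⊓ W ≤ W') ∧
          ∀ (g : G.E) (hs : G.IsInner (G.src g)) (ht : G.IsInner (G.tgt g))
          (h : G.arrowTgt F g hs ht = v), G.weight F g = 2 →
          ∀ z, cast (congrArg M.space h) (M.map g hs ht z) ∈ D := by
        by_cases hd : ∃ (g : G.E) (hs : G.IsInner (G.src g)) (ht : G.IsInner (G.tgt g))
          (_ : G.arrowTgt F g hs ht = v), G.weight F g = 2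
        · obtain ⟨g, hs, ht, h, hw⟩ := hd
          subst h
          refine ⟨LinearMap.range (M.map g hs ht), ?_, ?_⟩
          · rintro _ ⟨⟨z, rfl⟩, hz⟩
            by_contra hcon
            exact c1 ⟨g, hs, ht, hw, rfl, z, hz, hcon⟩
          · intro g' hs' ht' h' hw' z
            obtain rfl : g' = g := by
              refine hG.out_un _ _ hs' ?_ (hw'.trans hw.symm)
              rw [← aT2 F g' hs' ht' hw', ← aT2 F g hs ht hw, h']
            exact ⟨z, rfl⟩
        · refine ⟨⊥, by simp, ?_⟩
          intro g hs ht h hw z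
          exact absurd ⟨g, hs, ht, h, hw⟩ hd
      obtain ⟨D, hD1, hD2⟩ := hD
      have hyn : y ∉ W' ⊔ D := by
        intro h
        obtain ⟨a, ha, b, hb, rfl⟩ := Submodule.mem_sup.1 h
        refine hyW' (W'.add_mem ha (hD1 ⟨hb, ?_⟩))
        have := W.sub_mem hyW (hle ha)
        simpa using this
      obtain ⟨ξv, h1, h2⟩ := la2 _ y hyn
      refine ⟨[], Function.update (fun _ => 0) v y, Function.update (fun _ => 0) v ξv,
        ⟨⟨⟨v.1, rfl⟩, by simp⟩, ?_, ?_, ?_, ?_, ?_⟩, ?_, ?_⟩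
      · intro u hu
        rw [Function.update_of_ne (innerV_ne (fun h => hu (Or.inl h)))]
      · intro u hu
        rw [Function.update_of_ne (innerV_ne (fun h => hu (Or.inl h)))]
      · intro e hs ht htv
        rw [if_neg (by simp)]
        by_cases h : v = G.arrowSrc F e hs ht
        · have hw : G.weight F e = 1 := by
            rcases weight_cases F e with hw | hw
            · exact hw
            · exact absurd (by rw [h, aS2 F e hs ht hw]) htv
          rw [← hy e hs ht h hw]
          congr 1
          subst h
          rw [Function.update_self]; rfl
        · rw [Function.update_of_ne (Ne.symm h), map_zero]
      · intro e hs ht htv m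
        rw [if_neg (by simp)]
        by_cases h : G.arrowTgt F e hs ht = v
        · have hw : G.weight F e = 2 := by
            rcases weight_cases F e with hw | hw
            · exact absurd (by rw [← h, aT1 F e hs ht hw]) htv
            · exact hw
          rw [cast_dual M _ h, Function.update_self]
          exact h2 _ (Submodule.mem_sup_right (hD2 e hs ht h hw m))
        · rw [Function.update_of_ne h]; rfl
      · rw [Function.update_self, Function.update_self, h1]
      · rw [Function.update_self]; exact hyW
      · rw [Function.update_self]; exact fun z hz => h2 z (Submodule.mem_sup_left hz)
    · push Not at c2
      obtain ⟨y0, hy0, hy0'⟩ := SetLike.not_le_iff_exists.1 hnle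
      obtain ⟨g, hs, ht, h, hw, -⟩ := c2 y0 hy0 hy0'
      subst h
      have hker : ∀ y ∈ W, M.map g hs ht y = 0 → y ∈ W' := by
        intro y hy h0
        by_contra hcon
        obtain ⟨g', hs', ht', h', hw', hne⟩ := c2 y hy hcon
        obtain rfl : g = g' := by
          refine hG.out_un _ _ hs ?_ (hw.trans hw'.symm)
          rw [← aS1 F g hs ht hw, ← aS1 F g' hs' ht' hw', h']
        exact hne h0
      have eS := aS1 F g hs ht hw
      have eT := aT1 F g hs ht hw
      have hlt := hcrk g
      rw [eS] at hvn
      have hne : G.arrowTgt F g hs ht ≠ G.arrowSrc F g hs ht := by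
        intro h
        have := congrArg Subtype.val h
        rw [eS, eT] at this
        rw [this] at hlt
        omega
      obtain ⟨r, x', ξ', hF, hxW, hξW⟩ := ih (G.arrowTgt F g hs ht) (by rw [eT]; omega)
        (W'.map (M.map g hs ht)) (W.map (M.map g hs ht)) (Submodule.map_mono hle) (by
          intro h
          obtain ⟨y1, hy1, hy2⟩ := h ⟨y0, hy0, rfl⟩
          have h3 : y0 - y1 ∈ W' := hker _ (W.sub_mem hy0 (hle hy1)) (by rw [map_sub, hy2, sub_self])
          apply hy0'
          have := W'.add_mem h3 hy1
          simpa using this)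
      obtain ⟨y, hyW, hy⟩ := hxW
      refine ⟨g :: r, Function.update x' (G.arrowSrc F g hs ht) y,
        Function.update ξ' (G.arrowSrc F g hs ht) (ξ' (G.arrowTgt F g hs ht) ∘ₗ M.map g hs ht),
        ?_, ?_, ?_⟩
      · refine fam_cons hG M hF hs ht eS.symm eT.symm ?_ ?_ ?_ ?_
        · intro u hu
          rw [Function.update_of_ne (innerV_ne hu)]
        · intro u hu
          rw [Function.update_of_ne (innerV_ne hu)]
        · rw [Function.update_of_ne hne, Function.update_self, hy]
        · intro m
          rw [Function.update_of_ne hne, Function.update_self]; rfl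
      · rw [Function.update_self]; exact hyW
      · rw [Function.update_self]
        exact fun z hz => hξW _ ⟨z, hz, rfl⟩

end fam
end Aux
end DAG


namespace DAG
namespace Aux
variable {G : DAG}

section str
variable (F : G.Framing) (K : Type) [Field K]

lemma on_src {v : G.V} {l : List G.E} (h : SP v l) {e : G.E} (he : e ∈ l) :
    On v l (G.src e) := by
  obtain ⟨⟨w, hw⟩, -⟩ := h
  exact isP_src_mem hw e he

lemma on_tgt {v : G.V} {l : List G.E} {e : G.E} (he : e ∈ l) :
    On v l (G.tgt e) := Or.inr ⟨e, he, rfl⟩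

lemma on_aS {v : G.V} {l : List G.E} (h : SP v l) {e : G.E} (he : e ∈ l) (hs ht) :
    On v l (G.arrowSrc F e hs ht).1 := by
  rcases aS_or F e hs ht with h1 | h1 <;> rw [h1]
  · exact on_src h he
  · exact on_tgt he

lemma on_aT {v : G.V} {l : List G.E} (h : SP v l) {e : G.E} (he : e ∈ l) (hs ht) :
    On v l (G.arrowTgt F e hs ht).1 := by
  rcases aT_or F e hs ht with h1 | h1 <;> rw [h1]
  · exact on_src h he
  · exact on_tgt he

/-- The vector space of the string module at a vertex. -/
abbrev Sp (S : Str G) (v : G.InnerV) : Type := PLift (On S.1.1.1 S.1.2 v.1) → K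

instance (S : Str G) (v : G.InnerV) : Finite (PLift (On S.1.1.1 S.1.2 v.1)) :=
  Finite.of_subsingleton

lemma sp_cast (S : Str G) {u v : G.InnerV} (h : u = v) (f : Sp K S u)
    (p : PLift (On S.1.1.1 S.1.2 v.1)) (q : PLift (On S.1.1.1 S.1.2 u.1)) :
    cast (congrArg (Sp K S) h) f p = f q := by
  subst h
  obtain rfl : p = q := Subsingleton.elim _ _
  rfl

open Classical in
/-- The arrow maps of the string module. -/
noncomputable def spMap (S : Str G) (e : G.E) (hs : G.IsInner (G.src e))
    (ht : G.IsInner (G.tgt e)) :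
    Sp K S (G.arrowSrc F e hs ht) →ₗ[K] Sp K S (G.arrowTgt F e hs ht) where
  toFun f := fun _ => if h : e ∈ S.1.2 then f ⟨on_aS F S.2 h hs ht⟩ else 0
  map_add' f g := by
    funext p
    by_cases h : e ∈ S.1.2 <;> simp [h]
  map_smul' c f := by
    funext p
    by_cases h : e ∈ S.1.2 <;> simp [h]

lemma spMap_pos (S : Str G) (e : G.E) (hs ht) (f : Sp K S (G.arrowSrc F e hs ht)) (h : e ∈ S.1.2)
    (p) : spMap F K S e hs ht f p = f ⟨on_aS F S.2 h hs ht⟩ := by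
  simp [spMap, h]

lemma spMap_neg (S : Str G) (e : G.E) (hs ht) (f : Sp K S (G.arrowSrc F e hs ht)) (h : e ∉ S.1.2) :
    spMap F K S e hs ht f = 0 := by
  funext p
  simp [spMap, h]

/-- The string module. -/
noncomputable def strRep (S : Str G) : G.Rep F K where
  space := Sp K S
  map := spMap F K S
  rel := by
    intro e₁ e₂ hs₁ ht₁ hs₂ ht₂ h hw x
    by_cases h2 : e₂ ∈ S.1.2
    swap
    · exact spMap_neg F K S e₂ hs₂ ht₂ _ h2
    by_cases h1 : e₁ ∈ S.1.2
    · exfalso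
      obtain ⟨rk, hrk⟩ := exists_rk G
      obtain ⟨⟨w, hP⟩, -⟩ := S.2
      have hv : (G.arrowTgt F e₁ hs₁ ht₁).1 = (G.arrowSrc F e₂ hs₂ ht₂).1 := by rw [h]
      rcases weight_cases F e₁ with a | a <;> rcases weight_cases F e₂ with b | b
      · exact hw (a.trans b.symm)
      · rw [aT1 F _ _ _ a, aS2 F _ _ _ b] at hv
        exact hw (congrArg _ (isP_tgt_inj rk hrk hP _ h1 _ h2 hv))
      · rw [aT2 F _ _ _ a, aS1 F _ _ _ b] at hv
        exact hw (congrArg _ (isP_src_inj rk hrk hP _ h1 _ h2 hv))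
      · exact hw (a.trans b.symm)
    · funext p
      rw [spMap_pos F K S e₂ hs₂ ht₂ _ h2]
      rw [sp_cast K S h _ _ ⟨by rw [h]; exact on_aS F S.2 h2 hs₂ ht₂⟩]
      rw [spMap_neg F K S e₁ hs₁ ht₁ _ h1]
      rfl

lemma strRep_indec (S : Str G) : Indecomposable (strRep F K S) := by
  classical
  refine ⟨⟨S.1.1, (fun _ => 1 : Sp K S S.1.1), ?_⟩, ?_⟩
  · intro h
    exact one_ne_zero (congrFun (show (fun _ => 1 : Sp K S S.1.1) = 0 from h) ⟨Or.inl rfl⟩)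
  intro φ hφ
  let c : G.V → K := fun v => if h : ∃ hi : G.IsInner v, On S.1.1.1 S.1.2 v then
    (φ.app ⟨v, h.1⟩ (fun _ => 1 : Sp K S ⟨v, h.1⟩) : Sp K S ⟨v, h.1⟩) ⟨h.2⟩ else 0
  have hc : ∀ (v : G.InnerV) (h : On S.1.1.1 S.1.2 v.1),
      c v.1 = (φ.app v (fun _ => 1 : Sp K S v) : Sp K S v) ⟨h⟩ := by
    intro v h
    exact dif_pos ⟨v.2, h⟩
  have happ : ∀ (v : G.InnerV) (x : Sp K S v) (p), (φ.app v x : Sp K S v) p = c v.1 * x p := by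
    intro v x p
    have hx : x = x p • (fun _ => 1 : Sp K S v) := by
      funext q
      have : q = p := Subsingleton.elim _ _
      simp [this]
    rw [hc v p.down]
    conv_lhs => rw [hx]
    have h1 := (φ.app v).map_smul (x p) (fun _ => 1 : Sp K S v)
    refine (congrFun (show _ = (_ : Sp K S v) from h1) p).trans ?_
    exact mul_comm _ _
  have hcc : ∀ v : G.InnerV, On S.1.1.1 S.1.2 v.1 → c v.1 = 0 ∨ c v.1 = 1 := by
    intro v h
    have h1 := congrFun (show _ = (_ : Sp K S v) from hφ v (fun _ => 1 : Sp K S v)) ⟨h⟩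
    have h1' := (happ v _ ⟨h⟩).symm.trans h1
    have h0 := happ v (fun _ => 1) ⟨h⟩
    have h1 := (congrArg (fun z => c v.1 * z) h0).symm.trans (h1'.trans h0)
    simp only [mul_one] at h1
    have h2 : c v.1 * (c v.1 - 1) = 0 := by linear_combination h1
    rcases mul_eq_zero.1 h2 with h3 | h3
    · exact Or.inl h3
    · exact Or.inr (sub_eq_zero.1 h3)
  obtain ⟨⟨w, hP⟩, hin⟩ := S.2
  have hsi : ∀ e ∈ S.1.2, G.IsInner (G.src e) := by
    intro e he
    rcases on_src S.2 he with h | ⟨f, hf, h⟩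
    · rw [h]; exact S.1.1.2
    · rw [← h]; exact hin f hf
  have hce : ∀ e ∈ S.1.2, c (G.src e) = c (G.tgt e) := by
    intro e he
    have hs := hsi e he
    have ht := hin e he
    have h1 := congrFun (show _ = (_ : Sp K S _) from
      φ.comm e hs ht (fun _ => 1 : Sp K S _)) ⟨on_aT F S.2 he hs ht⟩
    have h2 := spMap_pos F K S e hs ht (fun _ => 1) he ⟨on_aT F S.2 he hs ht⟩
    have h3 := spMap_pos F K S e hs ht (φ.app _ (fun _ => 1 : Sp K S _)) he ⟨on_aT F S.2 he hs ht⟩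
    have h4 : c (G.arrowTgt F e hs ht).1 = c (G.arrowSrc F e hs ht).1 := by
      have h5 := (happ _ _ _).symm.trans ((h1.trans h3).trans (happ _ _ _))
      have h6 := (congrArg (fun z => c (G.arrowTgt F e hs ht).1 * z) h2).symm.trans h5
      simpa using h6
    rcases weight_cases F e with a | a
    · rw [aT1 F _ _ _ a, aS1 F _ _ _ a] at h4; exact h4.symm
    · rw [aT2 F _ _ _ a, aS2 F _ _ _ a] at h4; exact h4
  have hconst := isP_const c hP hce
  have hcon : ∀ v, On S.1.1.1 S.1.2 v → c v = c S.1.1.1 := by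
    rintro v (rfl | ⟨e, he, rfl⟩)
    · rfl
    · exact hconst e he
  rcases hcc S.1.1 (Or.inl rfl) with h | h
  · left
    intro v x
    refine (show _ = (_ : Sp K S v) from ?_)
    funext p
    refine (happ v x p).trans ?_
    rw [hcon _ p.down, h, zero_mul]; rfl
  · right
    intro v x
    refine (show _ = (_ : Sp K S v) from ?_)
    funext p
    refine (happ v x p).trans ?_
    rw [hcon _ p.down, h, one_mul]

end str

section inv
variable {F : G.Framing} {K : Type} [Field K]

/-- support -/
def supp (M : G.Rep F K) : Set G.InnerV := {v | ∃ x : M.space v, x ≠ 0}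

/-- edges acting nontrivially -/
def esupp (M : G.Rep F K) : Set G.E := {e | ∃ hs ht x, M.map e hs ht x ≠ 0}

lemma supp_iso {M N : G.Rep F K} (h : RepIso M N) : supp M = supp N := by
  obtain ⟨φ, hφ⟩ := h
  ext v
  constructor
  · rintro ⟨x, hx⟩
    exact ⟨φ.app v x, fun h => hx ((hφ v).1 (h.trans (map_zero _).symm))⟩
  · rintro ⟨y, hy⟩
    obtain ⟨x, rfl⟩ := (hφ v).2 y
    exact ⟨x, fun h => hy (by rw [h, map_zero])⟩

lemma esupp_iso {M N : G.Rep F K} (h : RepIso M N) : esupp M = esupp N := by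
  obtain ⟨φ, hφ⟩ := h
  ext e
  constructor
  · rintro ⟨hs, ht, x, hx⟩
    refine ⟨hs, ht, φ.app _ x, fun h => hx ?_⟩
    rw [← φ.comm] at h
    exact (hφ _).1 (h.trans (map_zero _).symm)
  · rintro ⟨hs, ht, y, hy⟩
    obtain ⟨x, rfl⟩ := (hφ _).2 y
    rw [← φ.comm] at hy
    exact ⟨hs, ht, x, fun h => hy (by rw [h, map_zero])⟩

lemma supp_str (S : Str G) (v : G.InnerV) : v ∈ supp (strRep F K S) ↔ On S.1.1.1 S.1.2 v.1 := by
  constructor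
  · rintro ⟨x, hx⟩
    by_contra h
    apply hx
    refine (show _ = (_ : Sp K S v) from ?_)
    funext p
    exact absurd p.down h
  · intro h
    refine ⟨(fun _ => 1 : Sp K S v), fun h0 => ?_⟩
    exact one_ne_zero (congrFun (show (fun _ => 1 : Sp K S v) = 0 from h0) ⟨h⟩)

lemma esupp_str (S : Str G) (e : G.E) : e ∈ esupp (strRep F K S) ↔ e ∈ S.1.2 := by
  constructor
  · rintro ⟨hs, ht, x, hx⟩
    by_contra h
    exact hx (spMap_neg F K S e hs ht x h)
  · intro he
    have ht := S.2.2 e he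
    have hs : G.IsInner (G.src e) := by
      rcases on_src S.2 he with h | ⟨f, hf, h⟩
      · rw [h]; exact S.1.1.2
      · rw [← h]; exact S.2.2 f hf
    refine ⟨hs, ht, (fun _ => 1 : Sp K S _), fun h0 => ?_⟩
    have h1 := congrFun (show _ = (0 : Sp K S _) from h0) ⟨on_aT F S.2 he hs ht⟩
    exact one_ne_zero ((spMap_pos F K S e hs ht (fun _ => 1) he _).symm.trans h1)

lemma on_rk (rk : G.V → ℕ) (hrk : ∀ e, rk (G.src e) < rk (G.tgt e)) {v : G.V} {l : List G.E}
    (h : SP v l) {u : G.V} (hu : On v l u) : u = v ∨ rk v < rk u := by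
  obtain ⟨⟨w, hw⟩, -⟩ := h
  rcases hu with h | ⟨e, he, rfl⟩
  · exact Or.inl h
  · right
    have := isP_rk rk hrk hw e he
    have := hrk e
    omega

lemma str_inj (S T : Str G) (h1 : supp (strRep F K S) = supp (strRep F K T))
    (h2 : esupp (strRep F K S) = esupp (strRep F K T)) : S = T := by
  obtain ⟨rk, hrk⟩ := exists_rk G
  have hv : S.1.1 = T.1.1 := by
    have a : On T.1.1.1 T.1.2 S.1.1.1 := by
      rw [← supp_str (F := F) (K := K) T S.1.1, ← h1, supp_str]; exact Or.inl rfl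
    have b : On S.1.1.1 S.1.2 T.1.1.1 := by
      rw [← supp_str (F := F) (K := K) S T.1.1, h1, supp_str]; exact Or.inl rfl
    apply innerV_ext
    rcases on_rk rk hrk T.2 a with h | h
    · exact h
    · rcases on_rk rk hrk S.2 b with h' | h'
      · exact h'.symm
      · omega
  have hl : ∀ e, e ∈ S.1.2 ↔ e ∈ T.1.2 := by
    intro e
    rw [← esupp_str (F := F) (K := K) S, ← esupp_str (F := F) (K := K) T, h2]
  obtain ⟨⟨v, l⟩, ⟨⟨w, hw⟩, hi⟩⟩ := S
  obtain ⟨⟨v', l'⟩, ⟨⟨w', hw'⟩, hi'⟩⟩ := T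
  obtain rfl : v = v' := hv
  obtain rfl : l = l' := isP_edges_det rk hrk hw hw' hl
  rfl

lemma str_surj (hG : Good F) (M : G.Rep F K) (hM : Indecomposable M) :
    ∃ S : Str G, RepIso (strRep F K S) M := by
  classical
  obtain ⟨rk, hrk⟩ := exists_rk G
  obtain ⟨crk, hcrk⟩ := exists_crk G
  obtain ⟨⟨v0, x0, hx0⟩, hid⟩ := hM
  have hex : ∃ n, ∃ v : G.InnerV, rk v.1 = n ∧ ∃ x : M.space v, x ≠ 0 :=
    ⟨_, v0, rfl, x0, hx0⟩
  obtain ⟨v, hvn, y, hy⟩ := Nat.find_spec hex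
  have hmin : ∀ u : G.InnerV, rk u.1 < rk v.1 → ∀ m : M.space u, m = 0 := by
    intro u hu m
    by_contra hm
    rw [hvn] at hu
    exact Nat.find_min hex hu ⟨u, rfl, m, hm⟩
  obtain ⟨r, x, ξ, hF, -, -⟩ := out_lemma hG M crk hcrk (crk v.1 + 1) v (by omega) ⊥ ⊤ bot_le
    (fun h => hy (by simpa using h (Submodule.mem_top (x := y))))
  obtain ⟨⟨w, hP⟩, hin⟩ := hF.sp
  have hrv : ∀ e, G.tgt e = v.1 → e ∉ r := by
    intro e he hm
    have h1 := isP_rk rk hrk hP e hm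
    have h2 := hrk e
    rw [he] at h2
    omega
  have hsz : ∀ e (hs : G.IsInner (G.src e)) (_ : G.IsInner (G.tgt e)), G.tgt e = v.1 →
      ∀ (u : G.InnerV), u.1 = G.src e → ∀ m : M.space u, m = 0 := by
    intro e hs ht he u hu m
    apply hmin
    rw [hu, ← he]
    exact hrk e
  have hx : ∀ e hs ht, M.map e hs ht (x (G.arrowSrc F e hs ht)) =
      if e ∈ r then x (G.arrowTgt F e hs ht) else 0 := by
    intro e hs ht
    by_cases he : G.tgt e = v.1
    · rw [if_neg (hrv e he)]
      rcases weight_cases F e with a | a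
      · rw [hsz e hs ht he _ (aS1 F e hs ht a) (x _), map_zero]
      · exact hsz e hs ht he _ (aT2 F e hs ht a) _
    · exact hF.hx e hs ht he
  have hξ : ∀ e hs ht m, ξ (G.arrowTgt F e hs ht) (M.map e hs ht m) =
      if e ∈ r then ξ (G.arrowSrc F e hs ht) m else 0 := by
    intro e hs ht m
    by_cases he : G.tgt e = v.1
    · rw [if_neg (hrv e he)]
      rcases weight_cases F e with a | a
      · rw [hsz e hs ht he _ (aS1 F e hs ht a) m, map_zero, map_zero]
      · rw [hsz e hs ht he _ (aT2 F e hs ht a) (M.map e hs ht m), map_zero]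
    · exact hF.hξ e hs ht he m
  have hsi : ∀ e ∈ r, G.IsInner (G.src e) := by
    intro e he
    rcases on_src hF.sp he with h | ⟨f, hf, h⟩
    · rw [h]; exact v.2
    · rw [← h]; exact hin f hf
  let c : G.V → K := fun u => if h : G.IsInner u then ξ ⟨u, h⟩ (x ⟨u, h⟩) else 0
  have hc : ∀ u : G.InnerV, c u.1 = ξ u (x u) := fun u => dif_pos u.2
  have hce : ∀ e ∈ r, c (G.src e) = c (G.tgt e) := by
    intro e he
    have hs := hsi e he
    have ht := hin e he
    have h1 := hx e hs ht
    have h2 := hξ e hs ht (x (G.arrowSrc F e hs ht))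
    rw [if_pos he] at h1 h2
    rw [h1, ← hc, ← hc] at h2
    rcases weight_cases F e with a | a
    · rw [aT1 F _ _ _ a, aS1 F _ _ _ a] at h2; exact h2.symm
    · rw [aT2 F _ _ _ a, aS2 F _ _ _ a] at h2; exact h2
  have hone : ∀ u : G.InnerV, On v.1 r u.1 → ξ u (x u) = 1 := by
    intro u hu
    rw [← hF.one, ← hc, ← hc]
    rcases hu with h | ⟨e, he, h⟩
    · rw [h]
    · rw [← h]; exact isP_const c hP hce e he
  let φ : RepHom M M :=
    { app := fun u => (ξ u).smulRight (x u)
      comm := by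
        intro e hs ht m
        simp only [LinearMap.smulRight_apply, map_smul]
        rw [hx, hξ]
        by_cases he : e ∈ r <;> simp [he] }
  have hφ : ∀ u m, φ.app u m = ξ u m • x u := fun u m => rfl
  have hidem : ∀ u m, φ.app u (φ.app u m) = φ.app u m := by
    intro u m
    rw [hφ, hφ, map_smul, smul_eq_mul]
    by_cases hu : On v.1 r u.1
    · rw [hone u hu, mul_one]
    · rw [hF.sx u hu, smul_zero, smul_zero]
  have hall : ∀ u m, ξ u m • x u = m := by
    rcases hid φ hidem with h | h
    · exfalso
      have h1 := h v (x v)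
      rw [hφ, hF.one, one_smul] at h1
      have := hF.one
      rw [h1, map_zero] at this
      exact zero_ne_one this
    · exact h
  let S : Str G := ⟨(v, r), hF.sp⟩
  refine ⟨S, ⟨fun u => { toFun := fun f : Sp K S u => if h : On v.1 r u.1 then f ⟨h⟩ • x u else 0
                         map_add' := ?_
                         map_smul' := ?_ }, ?_⟩, ?_⟩
  · intro f g
    by_cases h : On v.1 r u.1
    · simp only [dif_pos h]; exact add_smul (f ⟨h⟩) (g ⟨h⟩) (x u)
    · simp [h]
  · intro a f
    by_cases h : On v.1 r u.1
    · simp only [dif_pos h]; exact mul_smul a (f ⟨h⟩) (x u)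
    · simp [h]
  · intro e hs ht f
    change (if h : On v.1 r (G.arrowTgt F e hs ht).1 then spMap F K S e hs ht f ⟨h⟩ • x _ else 0) =
      M.map e hs ht (if h : On v.1 r (G.arrowSrc F e hs ht).1 then f ⟨h⟩ • x _ else 0)
    by_cases he : e ∈ r
    · rw [dif_pos (on_aT F hF.sp he hs ht), dif_pos (on_aS F hF.sp he hs ht), map_smul, hx,
        if_pos he, spMap_pos F K S e hs ht f he]
    · have h1 : M.map e hs ht (x (G.arrowSrc F e hs ht)) = 0 := by rw [hx, if_neg he]
      have h2 : spMap F K S e hs ht f = 0 := spMap_neg F K S e hs ht f he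
      rw [h2]
      by_cases hS : On v.1 r (G.arrowSrc F e hs ht).1
      · rw [dif_pos hS, map_smul, h1, smul_zero]
        split_ifs
        · exact zero_smul _ _
        · rfl
      · rw [dif_neg hS, map_zero]
        split_ifs
        · exact zero_smul _ _
        · rfl
  · intro u
    change Function.Bijective
      (fun f : Sp K S u => if h : On v.1 r u.1 then f ⟨h⟩ • x u else 0)
    by_cases h : On v.1 r u.1
    · simp only [dif_pos h]
      constructor
      · intro f g hfg
        have h1 := congrArg (ξ u) (show f ⟨h⟩ • x u = g ⟨h⟩ • x u from hfg)
        rw [map_smul, map_smul, hone u h] at h1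
        funext p
        simpa using h1
      · intro m
        exact ⟨fun _ => ξ u m, hall u m⟩
    · constructor
      · intro f g _
        funext p
        exact absurd p.down h
      · intro m
        refine ⟨0, ?_⟩
        have := hall u m
        rw [hF.sx u h, smul_zero] at this
        simp [h, this]

lemma str_equiv (F : G.Framing) (K : Type) [Field K] (hG : Good F) :
    Nonempty (Str G ≃
      Quot (fun M N : {M : G.Rep F K // Indecomposable M} => RepIso M.1 N.1)) := by
  refine ⟨Equiv.ofBijective (fun S => Quot.mk _ ⟨strRep F K S, strRep_indec F K S⟩) ⟨?_, ?_⟩⟩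
  · intro S T h
    apply str_inj (F := F) (K := K)
    · exact congrArg (Quot.lift (fun M : {M : G.Rep F K // Indecomposable M} => supp M.1)
        (fun _ _ => supp_iso)) h
    · exact congrArg (Quot.lift (fun M : {M : G.Rep F K // Indecomposable M} => esupp M.1)
        (fun _ _ => esupp_iso)) h
  · intro q
    induction q using Quot.ind with
    | mk M =>
      obtain ⟨S, hS⟩ := str_surj hG M.1 M.2
      exact ⟨S, Quot.sound hS⟩

end inv
end Aux
end DAG

/-- For a full DAG `G` with a fixed ample framing, there is a
bijection between the non-exceptional routes of `G` and the set `T(Λ(G))` of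
isomorphism classes of indecomposable modules over the associated gentle
algebra `Λ(G)` together with the shifted projectives `P_i[1]`, one for each
inner vertex `i`. -/
theorem routes_modules_bijection (G : DAG) (F : G.Framing)
    (hfull : G.Full) (hample : G.Ample F)
    (K : Type) [Field K] [IsAlgClosed K] :
    Nonempty ({R : G.Route // ¬ G.Exceptional F R} ≃ G.TLambda F K) := by
  obtain ⟨e₁⟩ := DAG.Aux.routes_equiv (DAG.Aux.good hfull F hample)
  obtain ⟨e₂⟩ := DAG.Aux.str_equiv F K (DAG.Aux.good hfull F hample)
  exact ⟨e₁.trans (Equiv.sumCongr e₂ (Equiv.refl _))⟩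
end

section
/- Let G be a full DAG with a fixed ample framing. Then the gentle algebra Λ(G) is of finite representation type, and every indecomposable Λ(G)-module has dimension at most one at every vertex of the quiver. -/
/-! ### Linear algebra core -/

/-- Abstract form of a representation: `H1 i j` are the weight one edges `i → j`,
`H2 i j` the weight two edges `i → j` (acting backwards). -/
structure StrData (K : Type) [Field K] where
  I : Type
  V : I → Type
  [acg : ∀ v, AddCommGroup (V v)]
  [mod : ∀ v, Module K (V v)]
  r : I → ℕ
  H1 : I → I → Type
  H2 : I → I → Type
  r1 : ∀ {i j}, H1 i j → r i < r j
  r2 : ∀ {i j}, H2 i j → r i < r j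
  f1 : ∀ {i j}, H1 i j → V i →ₗ[K] V j
  f2 : ∀ {i j}, H2 i j → V j →ₗ[K] V i
  out1 : ∀ {i j j'} (a : H1 i j) (b : H1 i j'), (⟨j, a⟩ : Σ j, H1 i j) = ⟨j', b⟩
  out2 : ∀ {i j j'} (a : H2 i j) (b : H2 i j'), (⟨j, a⟩ : Σ j, H2 i j) = ⟨j', b⟩
  in1 : ∀ {i i' j} (a : H1 i j) (b : H1 i' j), (⟨i, a⟩ : Σ i, H1 i j) = ⟨i', b⟩
  in2 : ∀ {i i' j} (a : H2 i j) (b : H2 i' j), (⟨i, a⟩ : Σ i, H2 i j) = ⟨i', b⟩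
  rel21 : ∀ {i k j} (a : H1 i j) (b : H2 k j) (x : V i), f2 b (f1 a x) = 0
  rel12 : ∀ {i k j} (a : H2 i j) (b : H1 i k) (x : V j), f1 b (f2 a x) = 0

attribute [instance] StrData.acg StrData.mod

namespace StrData

variable {K : Type} [Field K] (D : StrData K)

/-- A rank one family of maps, compatible with all edges except those ending at `w`. -/
structure Good (w : D.I) (x : ∀ v, D.V v) (ξ : ∀ v, D.V v →ₗ[K] K) : Prop where
  supp : ∀ u, u ≠ w → D.r u ≤ D.r w → x u = 0 ∧ ξ u = 0
  idem : ∀ u, ξ u (x u) = 1 ∨ (x u = 0 ∧ ξ u = 0)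
  d1 : ∀ {i j} (a : D.H1 i j), j ≠ w → ∀ y, ξ i y • D.f1 a (x i) = ξ j (D.f1 a y) • x j
  d2 : ∀ {i j} (a : D.H2 i j), j ≠ w → ∀ y, ξ j y • D.f2 a (x j) = ξ i (D.f2 a y) • x i
  e1 : ∀ {i j} (a : D.H1 i j), j ≠ w → D.f1 a (x i) = 0 ∨ D.f1 a (x i) = x j
  e2 : ∀ {i j} (a : D.H2 i j), j ≠ w → D.f2 a (x j) = 0 ∨ D.f2 a (x j) = x i

open Classical in
theorem good_single (w : D.I) (x0 : D.V w) (ξ0 : D.V w →ₗ[K] K) (h1 : ξ0 x0 = 1)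
    (hx : ∀ {j} (c : D.H1 w j), D.f1 c x0 = 0)
    (hξ : ∀ {j} (c : D.H2 w j) y, ξ0 (D.f2 c y) = 0) :
    D.Good w (Function.update 0 w x0) (Function.update 0 w ξ0) := by
  constructor
  · intro u hu _
    simp [hu]
  · intro u
    by_cases hu : u = w
    · subst hu; simp [h1]
    · simp [hu]
  · intro i j a hj y
    by_cases hi : i = w
    · subst hi; simp [hj, hx]
    · simp [hi, hj]
  · intro i j a hj y
    by_cases hi : i = w
    · subst hi; simp [hj, hξ]
    · simp [hi, hj]
  · intro i j a hj
    by_cases hi : i = w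
    · subst hi; simp [hx]
    · simp [hi]
  · intro i j a hj
    simp [hj]

open Classical in
theorem good_step1 {w w' : D.I} (b : D.H1 w w') {x : ∀ v, D.V v} {ξ : ∀ v, D.V v →ₗ[K] K}
    (h : D.Good w' x ξ) (x0 : D.V w) (hx0 : D.f1 b x0 = x w') (h1 : ξ w' (x w') = 1) :
    D.Good w (Function.update x w x0) (Function.update ξ w (ξ w' ∘ₗ D.f1 b)) := by
  have hr := D.r1 b
  have hne : w' ≠ w := by rintro rfl; omega
  obtain ⟨hw1, hw2⟩ := h.supp w hne.symm hr.le
  constructor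
  · intro u hu hur
    have : u ≠ w' := by rintro rfl; omega
    simpa [hu] using h.supp u this (by omega)
  · intro u
    by_cases hu : u = w
    · subst hu; simp [h1, hx0]
    · simpa [hu] using h.idem u
  · intro i j a hj y
    by_cases hi : i = w
    · subst hi
      cases D.out1 a b
      simp [hj, hx0]
    · by_cases hj' : j = w'
      · subst hj'
        cases D.in1 a b
        exact absurd rfl hi
      · simpa [hi, hj] using h.d1 a hj' y
  · intro i j a hj y
    by_cases hj' : j = w'
    · subst hj'
      have h0 : D.f2 a (x j) = 0 := by rw [← hx0]; exact D.rel21 b a x0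
      by_cases hi : i = w
      · subst hi
        simp [hj, h0, D.rel12 a b]
      · have := h.supp i (by rintro rfl; exact absurd (D.r2 a) (lt_irrefl _)) (D.r2 a).le
        simp [hj, hi, h0, this.1]
    · by_cases hi : i = w
      · subst hi
        have := h.d2 a hj' y
        rw [hw1, smul_zero] at this
        simp only [Function.update_self, Function.update_of_ne hj, this]
        simp [D.rel12 a b]
      · simpa [hi, hj] using h.d2 a hj' y
  · intro i j a hj
    by_cases hi : i = w
    · subst hi
      cases D.out1 a b
      simp [hj, hx0]
    · by_cases hj' : j = w'
      · subst hj'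
        cases D.in1 a b
        exact absurd rfl hi
      · simpa [hi, hj] using h.e1 a hj'
  · intro i j a hj
    by_cases hj' : j = w'
    · subst hj'
      have h0 : D.f2 a (x j) = 0 := by rw [← hx0]; exact D.rel21 b a x0
      left
      simp [hj, h0]
    · by_cases hi : i = w
      · subst hi
        have := h.e2 a hj'
        rw [hw1, or_self] at this
        simp [hj, this]
      · simpa [hi, hj] using h.e2 a hj'

open Classical in
theorem good_step2 {w w' : D.I} (b : D.H2 w w') {x : ∀ v, D.V v} {ξ : ∀ v, D.V v →ₗ[K] K}
    (h : D.Good w' x ξ) (ξ0 : D.V w →ₗ[K] K) (hξ0 : ξ0 ∘ₗ D.f2 b = ξ w')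
    (h1 : ξ w' (x w') = 1) :
    D.Good w (Function.update x w (D.f2 b (x w'))) (Function.update ξ w ξ0) := by
  have hr := D.r2 b
  have hne : w' ≠ w := by rintro rfl; omega
  obtain ⟨hw1, hw2⟩ := h.supp w hne.symm hr.le
  have hξ1 : ∀ y, ξ0 (D.f2 b y) = ξ w' y := fun y => by rw [← hξ0]; rfl
  constructor
  · intro u hu hur
    have : u ≠ w' := by rintro rfl; omega
    simpa [hu] using h.supp u this (by omega)
  · intro u
    by_cases hu : u = w
    · subst hu; simp [h1, hξ1]
    · simpa [hu] using h.idem u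
  · intro i j a hj y
    by_cases hj' : j = w'
    · subst hj'
      have h0 : ∀ y, ξ j (D.f1 a y) = 0 := by intro y; rw [← hξ1, D.rel21 a b]; simp
      by_cases hi : i = w
      · subst hi
        simp [hj, h0, D.rel12 b a]
      · have := h.supp i (by rintro rfl; exact absurd (D.r1 a) (lt_irrefl _)) (D.r1 a).le
        simp [hj, hi, h0, this.1]
    · by_cases hi : i = w
      · subst hi
        have := h.d1 a hj' y
        rw [hw1, map_zero, smul_zero] at this
        simp only [Function.update_self, Function.update_of_ne hj, ← this]
        simp [D.rel12 b a]
      · simpa [hi, hj] using h.d1 a hj' y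
  · intro i j a hj y
    by_cases hi : i = w
    · subst hi
      cases D.out2 a b
      simp [hj, hξ1]
    · by_cases hj' : j = w'
      · subst hj'
        cases D.in2 a b
        exact absurd rfl hi
      · simpa [hi, hj] using h.d2 a hj' y
  · intro i j a hj
    by_cases hi : i = w
    · subst hi
      left
      simp [D.rel12 b a]
    · by_cases hj' : j = w'
      · subst hj'
        have := h.supp i (by rintro rfl; exact absurd (D.r1 a) (lt_irrefl _)) (D.r1 a).le
        left
        simp [hi, this.1]
      · simpa [hi, hj] using h.e1 a hj'
  · intro i j a hj
    by_cases hi : i = w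
    · subst hi
      cases D.out2 a b
      simp [hj]
    · by_cases hj' : j = w'
      · subst hj'
        cases D.in2 a b
        exact absurd rfl hi
      · simpa [hi, hj] using h.e2 a hj'

theorem exists_good [Finite D.I] (n : ℕ) : ∀ (w : D.I), (∀ u, D.r u < D.r w + n) →
    ∀ (N L : Submodule K (D.V w)), N ≤ L → ¬ L ≤ N →
    ∃ x ξ, D.Good w x ξ ∧ x w ∈ L ∧ (∀ y ∈ N, ξ w y = 0) ∧ ξ w (x w) = 1 := by
  classical
  induction n with
  | zero => intro w hw; exact absurd (hw w) (by simp)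
  | succ n ih =>
  intro w hw N L hNL hLN
  by_cases c1 : ∃ (j : D.I) (b : D.H2 w j) (z : D.V j), D.f2 b z ∈ L ∧ D.f2 b z ∉ N
  · obtain ⟨j, b, z, hzL, hzN⟩ := c1
    obtain ⟨x, ξ, hg, hxL, hξN, h1⟩ := ih j
      (fun u => by have := D.r2 b; have := hw u; omega)
      (N.comap (D.f2 b)) (L.comap (D.f2 b)) (Submodule.comap_mono hNL) (fun h => hzN (h hzL))
    have hmem : ξ j ∈ (LinearMap.ker (N.mkQ ∘ₗ D.f2 b)).dualAnnihilator := by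
      rw [Submodule.mem_dualAnnihilator]
      intro y hy
      apply hξN
      simpa using hy
    rw [← LinearMap.range_dualMap_eq_dualAnnihilator_ker] at hmem
    obtain ⟨g, hgξ⟩ := hmem
    have hξ0 : (g ∘ₗ N.mkQ) ∘ₗ D.f2 b = ξ j := by rw [← hgξ]; rfl
    refine ⟨_, _, D.good_step2 b hg (g ∘ₗ N.mkQ) hξ0 h1, ?_, ?_, ?_⟩
    · simpa using hxL
    · intro y hy
      have : N.mkQ y = 0 := by simpa using hy
      simp only [Function.update_self, LinearMap.comp_apply, this, map_zero]
    · simp only [Function.update_self]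
      rw [← h1, ← hξ0]; rfl
  push Not at c1
  let P : Submodule K (D.V w) := ⨆ q : (Σ j, D.H2 w j), LinearMap.range (D.f2 q.2)
  have hP : ∀ y ∈ P, y ∈ L → y ∈ N := by
    intro y hy hyL
    by_cases he : Nonempty (Σ j, D.H2 w j)
    · obtain ⟨⟨j, b⟩⟩ := he
      have : P ≤ LinearMap.range (D.f2 b) := by
        refine iSup_le ?_
        rintro ⟨j', b'⟩
        cases D.out2 b b'
        exact le_rfl
      obtain ⟨z, rfl⟩ := this hy
      exact c1 j b z hyL
    · rw [not_nonempty_iff] at he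
      have : P = ⊥ := iSup_of_empty _
      rw [this] at hy
      rw [(Submodule.mem_bot K).1 hy]
      exact N.zero_mem
  have hNP : ∀ y ∈ N ⊔ P, y ∈ L → y ∈ N := by
    intro y hy hyL
    obtain ⟨a, ha, p, hp, rfl⟩ := Submodule.mem_sup.1 hy
    have hpL : p ∈ L := by
      have := L.sub_mem hyL (hNL ha)
      simpa using this
    exact N.add_mem ha (hP p hp hpL)
  by_cases c2 : ∃ x0 ∈ L, (∀ j (c : D.H1 w j), D.f1 c x0 = 0) ∧ x0 ∉ N ⊔ P
  · obtain ⟨x0, hx0L, hx0, hx0N⟩ := c2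
    obtain ⟨g, hg0, hg⟩ := Submodule.exists_le_ker_of_notMem hx0N
    have hk : ∀ y ∈ N ⊔ P, g y = 0 := fun y hy => by simpa using hg hy
    refine ⟨_, _, D.good_single w x0 ((g x0)⁻¹ • g) (by simp [hg0]) (fun c => hx0 _ c) ?_,
      ?_, ?_, ?_⟩
    · intro j c y
      have : D.f2 c y ∈ N ⊔ P := by
        refine Submodule.mem_sup_right ?_
        exact Submodule.mem_iSup_of_mem (⟨j, c⟩ : Σ j, D.H2 w j) ⟨y, rfl⟩
      simp [hk _ this]
    · simpa using hx0L
    · intro y hy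
      simp [hk y (Submodule.mem_sup_left hy)]
    · simp [hg0]
  push Not at c2
  by_cases he : Nonempty (Σ j, D.H1 w j)
  · obtain ⟨⟨j, b⟩⟩ := he
    have hker : ∀ y ∈ L, D.f1 b y = 0 → y ∈ N := by
      intro y hy hb
      refine hNP y (c2 y hy ?_) hy
      intro j' c
      cases D.out1 b c
      exact hb
    obtain ⟨x, ξ, hg, hxL, hξN, h1⟩ := ih j
      (fun u => by have := D.r1 b; have := hw u; omega)
      (N.map (D.f1 b)) (L.map (D.f1 b)) (Submodule.map_mono hNL) (by
        intro h
        apply hLN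
        intro y hy
        obtain ⟨m, hm, hmy⟩ := h (Submodule.mem_map_of_mem hy)
        have := hker (y - m) (L.sub_mem hy (hNL hm)) (by simp [hmy])
        simpa using N.add_mem this hm)
    obtain ⟨x0, hx0L, hx0⟩ := hxL
    refine ⟨_, _, D.good_step1 b hg x0 hx0 h1, ?_, ?_, ?_⟩
    · simpa using hx0L
    · intro y hy
      simpa using hξN _ (Submodule.mem_map_of_mem hy)
    · simp [hx0, h1]
  · exfalso
    apply hLN
    intro y hy
    refine hNP y (c2 y hy ?_) hy
    intro j c
    exact absurd ⟨⟨j, c⟩⟩ he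

/-- A nonzero representation has a nonzero rank-one idempotent endomorphism. -/
theorem exists_summand [Finite D.I] (hne : ∃ (v : D.I) (y : D.V v), y ≠ 0) :
    ∃ (x : ∀ v, D.V v) (ξ : ∀ v, D.V v →ₗ[K] K),
      (∃ v, ξ v (x v) = 1) ∧
      (∀ u, ξ u (x u) = 1 ∨ (x u = 0 ∧ ξ u = 0)) ∧
      (∀ {i j} (a : D.H1 i j) y, ξ i y • D.f1 a (x i) = ξ j (D.f1 a y) • x j) ∧
      (∀ {i j} (a : D.H2 i j) y, ξ j y • D.f2 a (x j) = ξ i (D.f2 a y) • x i) ∧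
      (∀ {i j} (a : D.H1 i j), D.f1 a (x i) = 0 ∨ D.f1 a (x i) = x j) ∧
      (∀ {i j} (a : D.H2 i j), D.f2 a (x j) = 0 ∨ D.f2 a (x j) = x i) := by
  obtain ⟨w, ⟨y, hy⟩, hmin⟩ := WellFounded.has_min (measure D.r).wf
    {v | ∃ y : D.V v, y ≠ 0} hne
  have hz : ∀ u, D.r u < D.r w → ∀ z : D.V u, z = 0 := by
    intro u hu z
    by_contra hz
    exact hmin u ⟨z, hz⟩ hu
  obtain ⟨n, hn⟩ := (Set.finite_range D.r).bddAbove
  obtain ⟨x, ξ, hg, -, -, h1⟩ := D.exists_good (n + 1) w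
    (fun u => by have := hn ⟨u, rfl⟩; omega) ⊥ ⊤ bot_le
    (fun h => hy (by simpa using h (Submodule.mem_top (x := y))))
  refine ⟨x, ξ, ⟨w, h1⟩, hg.idem, ?_, ?_, ?_, ?_⟩
  · intro i j a y'
    by_cases hj : j = w
    · subst hj
      rw [hz i (D.r1 a) y', hz i (D.r1 a) (x i)]; simp
    · exact hg.d1 a hj y'
  · intro i j a y'
    by_cases hj : j = w
    · subst hj
      rw [hz i (D.r2 a) (D.f2 a y'), hz i (D.r2 a) (D.f2 a _)]; simp
    · exact hg.d2 a hj y'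
  · intro i j a
    by_cases hj : j = w
    · subst hj
      rw [hz i (D.r1 a) (x i)]; simp
    · exact hg.e1 a hj
  · intro i j a
    by_cases hj : j = w
    · subst hj
      left
      exact hz i (D.r2 a) _
    · exact hg.e2 a hj

end StrData

/-! ### Combinatorics of ample framings -/

namespace DAG

section Combinatorics

variable {G : DAG}

open Classical in
/-- A topological rank function. -/
noncomputable def rk (v : G.V) : ℕ :=
  (Finset.univ.filter (fun u : G.V =>
    Relation.TransGen (fun a b : G.V => ∃ e : G.E, G.src e = a ∧ G.tgt e = b) u v)).card

theorem rk_lt (e : G.E) : rk (G.src e) < rk (G.tgt e) := by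
  classical
  unfold rk
  apply Finset.card_lt_card
  rw [Finset.ssubset_iff_of_subset]
  · refine ⟨G.src e, ?_, ?_⟩
    · simp only [Finset.mem_filter, Finset.mem_univ, true_and]
      exact Relation.TransGen.single ⟨e, rfl, rfl⟩
    · simp only [Finset.mem_filter, Finset.mem_univ, true_and]
      exact G.acyclic _
  · intro u
    simp only [Finset.mem_filter, Finset.mem_univ, true_and]
    intro h
    exact h.tail ⟨e, rfl, rfl⟩

theorem rk_le (v : G.V) : rk v ≤ Fintype.card G.V := by
  classical
  exact Finset.card_le_univ _

theorem extend_fwd (n : ℕ) : ∀ q : G.E, Fintype.card G.V < rk (G.tgt q) + n →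
    ∃ b : List G.E, (q :: b).IsChain (fun e f => G.tgt e = G.src f) ∧
      G.IsSink (G.tgt ((q :: b).getLast (by simp))) := by
  induction n with
  | zero => intro q h; exact absurd (rk_le (G.tgt q)) (by omega)
  | succ n ih =>
    intro q h
    by_cases hs : G.IsSink (G.tgt q)
    · exact ⟨[], by simp, by simpa using hs⟩
    · unfold IsSink at hs
      push Not at hs
      obtain ⟨f, hf⟩ := hs
      obtain ⟨b, hb, hl⟩ := ih f (by have := rk_lt f; rw [hf] at this; omega)
      refine ⟨f :: b, by simp [hf, hb], by simpa using hl⟩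

theorem extend_bwd (n : ℕ) : ∀ p : G.E, rk (G.src p) < n →
    ∃ a : List G.E, (a ++ [p]).IsChain (fun e f => G.tgt e = G.src f) ∧
      G.IsSource (G.src ((a ++ [p]).head (by simp))) := by
  induction n with
  | zero => intro q h; omega
  | succ n ih =>
    intro p h
    by_cases hs : G.IsSource (G.src p)
    · exact ⟨[], by simp, by simpa using hs⟩
    · unfold IsSource at hs
      push Not at hs
      obtain ⟨f, hf⟩ := hs
      obtain ⟨a, ha, hl⟩ := ih f (by have := rk_lt f; rw [hf] at this; omega)
      refine ⟨a ++ [f], ?_, ?_⟩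
      · rw [List.append_assoc, List.singleton_append, List.isChain_append_cons_cons]
        exact ⟨ha, hf, by simp⟩
      · rw [List.head_append_of_ne_nil (by simp)]
        exact hl

theorem exists_route (p q : G.E) (m : List G.E)
    (h : (p :: (m ++ [q])).IsChain (fun e f => G.tgt e = G.src f)) :
    ∃ (S : G.Route) (a b : List G.E), S.edges = (a ++ [p]) ++ (m ++ (q :: b)) := by
  obtain ⟨a, ha, ha'⟩ := extend_bwd _ p (Nat.lt_succ_self _)
  obtain ⟨b, hb, hb'⟩ := extend_fwd (Fintype.card G.V + 1) q (by omega)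
  refine ⟨⟨(a ++ [p]) ++ (m ++ (q :: b)), by simp, ?_, ?_, ?_⟩, a, b, rfl⟩
  · have h2 : (p :: (m ++ q :: b)).IsChain (fun e f => G.tgt e = G.src f) := by
      rw [← List.cons_append, List.isChain_split]
      exact ⟨by simpa using h, hb⟩
    have : (a ++ p :: (m ++ q :: b)).IsChain (fun e f => G.tgt e = G.src f) := by
      rw [List.isChain_split]
      exact ⟨ha, h2⟩
    change List.IsChain _ _
    simpa using this
  · rw [List.head_append_of_ne_nil (by simp)]
    exact ha'
  · rw [List.getLast_append_of_ne_nil _ (by simp), List.getLast_append_of_ne_nil _ (by simp)]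
    exact hb'

theorem exc_aux {F : G.Framing} {R : G.Route} (hR : G.Exceptional F R)
    {a b m : List G.E} {p q p' q' : G.E}
    (hE : R.edges = (a ++ [p]) ++ (m ++ (q :: b)))
    (hpt : G.tgt p' = G.tgt p) (hqs : G.src q' = G.src q)
    (hpp : p' ≠ p) (hqq : q' ≠ q) :
    ¬ (F.inlt p p' ∧ F.outlt q' q) ∧ ¬ (F.inlt p' p ∧ F.outlt q q') := by
  have hc : (p :: (m ++ q :: b)).IsChain (fun e f => G.tgt e = G.src f) := by
    have : R.edges.IsChain (fun e f => G.tgt e = G.src f) := R.chain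
    rw [hE] at this
    have h2 : (a ++ p :: (m ++ q :: b)).IsChain (fun e f => G.tgt e = G.src f) := by
      simpa using this
    exact (List.isChain_split.1 h2).2
  have hc2 : (p :: (m ++ [q])).IsChain (fun e f => G.tgt e = G.src f) := by
    rw [← List.cons_append, List.isChain_split] at hc
    simpa using hc.1
  have hc3 : (p' :: (m ++ [q'])).IsChain (fun e f => G.tgt e = G.src f) := by
    rw [← List.cons_append, List.isChain_append] at hc2 ⊢
    obtain ⟨h1, h2, h3⟩ := hc2
    refine ⟨?_, by simp, ?_⟩
    · cases m with
      | nil => simp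
      | cons e m => simpa [hpt] using h1
    · intro x hx y hy
      simp only [List.head?_cons, Option.mem_def, Option.some.injEq] at hy
      subst hy
      rw [hqs]
      cases m with
      | nil =>
        simp only [List.getLast?_singleton, Option.mem_def, Option.some.injEq] at hx
        subst hx
        rw [hpt]
        exact h3 p (by simp) q (by simp)
      | cons e m => exact h3 x (by simpa using hx) q (by simp)
  obtain ⟨S, c, d, hS⟩ := exists_route p' q' m hc3
  obtain ⟨h1, h2⟩ := hR S
  constructor
  · rintro ⟨hi, ho⟩
    apply h1
    exact ⟨G.tgt p, a, m ++ q :: b, c, m ++ q' :: d, p, p', hE, hS, rfl, hpt, by simp, by simp,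
      ⟨a, c, [], p, p', hpp.symm, rfl, rfl, hi⟩, ⟨m, d, b, q', q, hqq, rfl, rfl, ho⟩⟩
  · rintro ⟨hi, ho⟩
    apply h2
    exact ⟨G.tgt p, c, m ++ q' :: d, a, m ++ q :: b, p', p, hS, hE, hpt, rfl, by simp, by simp,
      ⟨c, a, [], p', p, hpp, rfl, rfl, hi⟩, ⟨m, b, d, q, q', hqq.symm, rfl, rfl, ho⟩⟩

theorem other_in (hfull : G.Full) (p : G.E) (h : G.IsInner (G.tgt p)) :
    ∃ p', p' ≠ p ∧ G.tgt p' = G.tgt p ∧ ∀ f, G.tgt f = G.tgt p → f ≠ p → f = p' := by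
  have := (hfull _ h).1
  unfold indeg at this
  rw [← Nat.card_eq_fintype_card, Nat.card_eq_two_iff' ⟨p, rfl⟩] at this
  obtain ⟨⟨p', hp'⟩, hne, hu⟩ := this
  refine ⟨p', fun h => hne (Subtype.ext h), hp', fun f hf hfp => ?_⟩
  exact congrArg Subtype.val (hu ⟨f, hf⟩ (fun h => hfp (congrArg Subtype.val h)))

theorem other_out (hfull : G.Full) (p : G.E) (h : G.IsInner (G.src p)) :
    ∃ p', p' ≠ p ∧ G.src p' = G.src p ∧ ∀ f, G.src f = G.src p → f ≠ p → f = p' := by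
  have := (hfull _ h).2
  unfold outdeg at this
  rw [← Nat.card_eq_fintype_card, Nat.card_eq_two_iff' ⟨p, rfl⟩] at this
  obtain ⟨⟨p', hp'⟩, hne, hu⟩ := this
  refine ⟨p', fun h => hne (Subtype.ext h), hp', fun f hf hfp => ?_⟩
  exact congrArg Subtype.val (hu ⟨f, hf⟩ (fun h => hfp (congrArg Subtype.val h)))

theorem min_consistent {F : G.Framing} (hfull : G.Full) (hample : G.Ample F) (e : G.E)
    (hs : G.IsInner (G.src e)) (ht : G.IsInner (G.tgt e)) :
    G.MinOut F e ↔ G.MinIn F e := by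
  obtain ⟨eo, heo, heos, heou⟩ := other_out hfull e hs
  obtain ⟨ei, hei, heit, heiu⟩ := other_in hfull e ht
  have hidle : ¬ G.Idle e := by
    rintro (⟨_, h⟩ | ⟨_, h⟩)
    · exact hei (h ei heit)
    · exact heo (h eo heos)
  obtain ⟨R, hR, heR⟩ := hample e hidle
  obtain ⟨l1, l2, hl⟩ := List.append_of_mem heR
  have hl1 : l1 ≠ [] := by
    rintro rfl
    have := R.source_start
    simp only [hl, List.nil_append, List.head_cons] at this
    exact hs.1 this
  have hl2 : l2 ≠ [] := by
    rintro rfl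
    have := R.sink_end
    simp only [hl, List.getLast_append_of_ne_nil, List.getLast_singleton, ne_eq,
      List.cons_ne_nil, not_false_eq_true] at this
    exact ht.2 this
  obtain ⟨a, p, rfl⟩ : ∃ a p, l1 = a ++ [p] :=
    ⟨_, _, (List.dropLast_append_getLast hl1).symm⟩
  obtain ⟨q, b, rfl⟩ := List.exists_cons_of_ne_nil hl2
  have hch : (a ++ p :: e :: q :: b).IsChain (fun e f => G.tgt e = G.src f) := by
    have : R.edges.IsChain (fun e f => G.tgt e = G.src f) := R.chain
    rw [hl] at this
    simpa using this
  rw [List.isChain_append_cons_cons, List.isChain_cons_cons] at hch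
  obtain ⟨-, hpe, heq, -⟩ := hch
  obtain ⟨p', hp, hpt, -⟩ := other_in hfull p (by rw [hpe]; exact hs)
  obtain ⟨q', hq, hqs, -⟩ := other_out hfull q (by rw [← heq]; exact ht)
  have k1 := exc_aux hR (m := []) (q := e) (q' := eo) (by simpa using hl) hpt heos hp heo
  have k2 := exc_aux hR (a := a ++ [p]) (m := []) (p := e) (p' := ei) (q := q) (q' := q') (b := b)
    (by simpa using hl) heit hqs hei hq
  have k3 := exc_aux hR (m := [e]) (q := q) (q' := q') (b := b) (by simpa using hl) hpt hqs hp hq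
  have t1 := F.inlt_total p p' hpt.symm (by rw [hpe]; exact hs) hp.symm
  have t2 := F.outlt_total q q' hqs.symm (by rw [← heq]; exact ht) hq.symm
  have t3 := F.inlt_total e ei heit.symm ht hei.symm
  have t4 := F.outlt_total e eo heos.symm hs heo.symm
  have n3 : ¬ (F.inlt e ei ∧ F.inlt ei e) := fun h => F.inlt_irrefl _ (F.inlt_trans h.1 h.2)
  have n4 : ¬ (F.outlt e eo ∧ F.outlt eo e) := fun h => F.outlt_irrefl _ (F.outlt_trans h.1 h.2)
  have m1 : G.MinOut F e ↔ F.outlt e eo :=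
    ⟨fun h => h eo heos heo, fun h f hf hfe => by rw [heou f hf hfe]; exact h⟩
  have m2 : G.MinIn F e ↔ F.inlt e ei :=
    ⟨fun h => h ei heit hei, fun h f hf hfe => by rw [heiu f hf hfe]; exact h⟩
  rw [m1, m2]
  clear m1 m2 hl hR heR hidle
  grind

theorem weight_eq_one_iff {F : G.Framing} (hfull : G.Full) (hample : G.Ample F) (e : G.E)
    (hs : G.IsInner (G.src e)) (ht : G.IsInner (G.tgt e)) :
    (G.weight F e = 1 ↔ G.MinOut F e) ∧ (G.weight F e = 1 ↔ G.MinIn F e) := by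
  have := min_consistent hfull hample e hs ht
  unfold weight
  split_ifs with h
  · simp [h.1 ht, h.2 hs]
  · simp only [OfNat.ofNat_ne_one, false_iff]
    tauto

theorem src_unique {F : G.Framing} (hfull : G.Full) (hample : G.Ample F) (e f : G.E)
    (hs : G.IsInner (G.src e)) (ht : G.IsInner (G.tgt e)) (ht' : G.IsInner (G.tgt f))
    (h : G.src e = G.src f) (hw : G.weight F e = 1 ↔ G.weight F f = 1) : e = f := by
  by_contra hne
  have hs' : G.IsInner (G.src f) := by rw [← h]; exact hs
  rw [(weight_eq_one_iff hfull hample e hs ht).1, (weight_eq_one_iff hfull hample f hs' ht').1]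
    at hw
  have key : ∀ e f : G.E, G.IsInner (G.src e) → G.src e = G.src f → e ≠ f →
      (G.MinOut F e ↔ F.outlt e f) := by
    intro e f hs h hne
    obtain ⟨o, ho, hos, hou⟩ := other_out hfull e hs
    obtain rfl := hou f h.symm (Ne.symm hne)
    exact ⟨fun h => h f hos ho, fun h g hg hge => by rw [hou g hg hge]; exact h⟩
  rw [key e f hs h hne, key f e hs' h.symm (Ne.symm hne)] at hw
  have := F.outlt_total e f h hs hne
  have n3 : ¬ (F.outlt e f ∧ F.outlt f e) := fun h => F.outlt_irrefl _ (F.outlt_trans h.1 h.2)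
  tauto

theorem tgt_unique {F : G.Framing} (hfull : G.Full) (hample : G.Ample F) (e f : G.E)
    (hs : G.IsInner (G.src e)) (ht : G.IsInner (G.tgt e)) (hs' : G.IsInner (G.src f))
    (h : G.tgt e = G.tgt f) (hw : G.weight F e = 1 ↔ G.weight F f = 1) : e = f := by
  by_contra hne
  have ht' : G.IsInner (G.tgt f) := by rw [← h]; exact ht
  rw [(weight_eq_one_iff hfull hample e hs ht).2, (weight_eq_one_iff hfull hample f hs' ht').2]
    at hw
  have key : ∀ e f : G.E, G.IsInner (G.tgt e) → G.tgt e = G.tgt f → e ≠ f →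
      (G.MinIn F e ↔ F.inlt e f) := by
    intro e f hs h hne
    obtain ⟨o, ho, hos, hou⟩ := other_in hfull e hs
    obtain rfl := hou f h.symm (Ne.symm hne)
    exact ⟨fun h => h f hos ho, fun h g hg hge => by rw [hou g hg hge]; exact h⟩
  rw [key e f ht h hne, key f e ht' h.symm (Ne.symm hne)] at hw
  have := F.inlt_total e f h ht hne
  have n3 : ¬ (F.inlt e f ∧ F.inlt f e) := fun h => F.inlt_irrefl _ (F.inlt_trans h.1 h.2)
  tauto

end Combinatorics

/-! ### Translation to the abstract data -/

section Translation

variable {G : DAG} {F : G.Framing} {K : Type} [Field K]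

/-- The structure map along an edge, with free endpoints. -/
noncomputable def Rep.fmap (M : G.Rep F K) (e : G.E) (hs : G.IsInner (G.src e))
    (ht : G.IsInner (G.tgt e)) {i j : G.InnerV} (h1 : G.arrowSrc F e hs ht = i)
    (h2 : G.arrowTgt F e hs ht = j) : M.space i →ₗ[K] M.space j := by
  subst h1 h2
  exact M.map e hs ht

theorem Rep.fmap_apply (M : G.Rep F K) (e : G.E) (hs : G.IsInner (G.src e))
    (ht : G.IsInner (G.tgt e)) {j : G.InnerV} (h2 : G.arrowTgt F e hs ht = j)
    (x : M.space (G.arrowSrc F e hs ht)) :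
    M.fmap e hs ht rfl h2 x = cast (congrArg M.space h2) (M.map e hs ht x) := by
  subst h2
  rfl

theorem Rep.fmap_rel (M : G.Rep F K) (e f : G.E) (hs : G.IsInner (G.src e))
    (ht : G.IsInner (G.tgt e)) (hs' : G.IsInner (G.src f))
    (ht' : G.IsInner (G.tgt f)) {i j k : G.InnerV} (h1 : G.arrowSrc F e hs ht = i)
    (h2 : G.arrowTgt F e hs ht = j) (h3 : G.arrowSrc F f hs' ht' = j)
    (h4 : G.arrowTgt F f hs' ht' = k) (hw : G.weight F e ≠ G.weight F f) (x : M.space i) :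
    M.fmap f hs' ht' h3 h4 (M.fmap e hs ht h1 h2 x) = 0 := by
  subst h1 h4 h3
  have := M.rel e f hs ht hs' ht' h2 hw x
  rw [Rep.fmap_apply M e]
  exact this

/-- Weight one arrows. -/
def A1 (F : G.Framing) (i j : G.InnerV) : Type :=
  {e : G.E // ∃ hs ht, G.weight F e = 1 ∧ G.arrowSrc F e hs ht = i ∧ G.arrowTgt F e hs ht = j}

/-- Weight two arrows. -/
def A2 (F : G.Framing) (i j : G.InnerV) : Type :=
  {e : G.E // ∃ hs ht, G.weight F e ≠ 1 ∧ G.arrowSrc F e hs ht = j ∧ G.arrowTgt F e hs ht = i}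

theorem A1.src {i j : G.InnerV} (a : A1 F i j) : G.src a.1 = i.1 := by
  obtain ⟨e, hs, ht, hw, rfl, rfl⟩ := a
  simp [arrowSrc, hw]

theorem A1.tgt {i j : G.InnerV} (a : A1 F i j) : G.tgt a.1 = j.1 := by
  obtain ⟨e, hs, ht, hw, rfl, rfl⟩ := a
  simp [arrowTgt, hw]

theorem A2.src {i j : G.InnerV} (a : A2 F i j) : G.src a.1 = i.1 := by
  obtain ⟨e, hs, ht, hw, rfl, rfl⟩ := a
  simp [arrowTgt, hw]

theorem A2.tgt {i j : G.InnerV} (a : A2 F i j) : G.tgt a.1 = j.1 := by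
  obtain ⟨e, hs, ht, hw, rfl, rfl⟩ := a
  simp [arrowSrc, hw]

theorem A1.w {i j : G.InnerV} (a : A1 F i j) : G.weight F a.1 = 1 := a.2.choose_spec.choose_spec.1

theorem A2.w {i j : G.InnerV} (a : A2 F i j) : G.weight F a.1 ≠ 1 := a.2.choose_spec.choose_spec.1

theorem A1.hs {i j : G.InnerV} (a : A1 F i j) : G.IsInner (G.src a.1) := a.2.choose

theorem A1.ht {i j : G.InnerV} (a : A1 F i j) : G.IsInner (G.tgt a.1) := a.2.choose_spec.choose

theorem A2.hs {i j : G.InnerV} (a : A2 F i j) : G.IsInner (G.src a.1) := a.2.choose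

theorem A2.ht {i j : G.InnerV} (a : A2 F i j) : G.IsInner (G.tgt a.1) := a.2.choose_spec.choose

theorem A1.h1 {i j : G.InnerV} (a : A1 F i j) : G.arrowSrc F a.1 a.hs a.ht = i :=
  a.2.choose_spec.choose_spec.2.1

theorem A1.h2 {i j : G.InnerV} (a : A1 F i j) : G.arrowTgt F a.1 a.hs a.ht = j :=
  a.2.choose_spec.choose_spec.2.2

theorem A2.h1 {i j : G.InnerV} (a : A2 F i j) : G.arrowSrc F a.1 a.hs a.ht = j :=
  a.2.choose_spec.choose_spec.2.1

theorem A2.h2 {i j : G.InnerV} (a : A2 F i j) : G.arrowTgt F a.1 a.hs a.ht = i :=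
  a.2.choose_spec.choose_spec.2.2

/-- The abstract data of a representation. -/
noncomputable def Rep.data (hfull : G.Full) (hample : G.Ample F) (M : G.Rep F K) :
    StrData K where
  I := G.InnerV
  V := M.space
  r := fun v => rk v.1
  H1 := A1 F
  H2 := A2 F
  r1 := fun a => by rw [← a.src, ← a.tgt]; exact rk_lt _
  r2 := fun a => by rw [← a.src, ← a.tgt]; exact rk_lt _
  f1 := fun a => M.fmap a.1 a.hs a.ht a.h1 a.h2
  f2 := fun a => M.fmap a.1 a.hs a.ht a.h1 a.h2
  out1 := fun {i j j'} a b => by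
    have h := src_unique hfull hample a.1 b.1 a.hs a.ht b.ht (by rw [a.src, b.src])
      (by simp [a.w, b.w])
    have hj : j = j' := Subtype.ext (by rw [← a.tgt, ← b.tgt, h])
    subst hj
    rw [show a = b from Subtype.ext h]
  out2 := fun {i j j'} a b => by
    have h := src_unique hfull hample a.1 b.1 a.hs a.ht b.ht (by rw [a.src, b.src])
      (by simp [a.w, b.w])
    have hj : j = j' := Subtype.ext (by rw [← a.tgt, ← b.tgt, h])
    subst hj
    rw [show a = b from Subtype.ext h]
  in1 := fun {i i' j} a b => by
    have h := tgt_unique hfull hample a.1 b.1 a.hs a.ht b.hs (by rw [a.tgt, b.tgt])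
      (by simp [a.w, b.w])
    have hj : i = i' := Subtype.ext (by rw [← a.src, ← b.src, h])
    subst hj
    rw [show a = b from Subtype.ext h]
  in2 := fun {i i' j} a b => by
    have h := tgt_unique hfull hample a.1 b.1 a.hs a.ht b.hs (by rw [a.tgt, b.tgt])
      (by simp [a.w, b.w])
    have hj : i = i' := Subtype.ext (by rw [← a.src, ← b.src, h])
    subst hj
    rw [show a = b from Subtype.ext h]
  rel21 := fun a b x => M.fmap_rel _ _ _ _ _ _ _ _ _ _ (by rw [a.w]; exact b.w.symm) x
  rel12 := fun a b x => M.fmap_rel _ _ _ _ _ _ _ _ _ _ (by rw [b.w]; exact a.w) x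

/-- The structure of indecomposable modules. -/
theorem indec_structure (hfull : G.Full) (hample : G.Ample F) (M : G.Rep F K)
    (hM : Indecomposable M) :
    ∃ (x : ∀ v, M.space v) (ξ : ∀ v, M.space v →ₗ[K] K),
      (∀ v y, ξ v y • x v = y) ∧
      (∀ (e : G.E) (hs : G.IsInner (G.src e)) (ht : G.IsInner (G.tgt e)),
        M.map e hs ht (x _) = 0 ∨ M.map e hs ht (x _) = x _) := by
  have : Finite (M.data hfull hample).I := inferInstanceAs (Finite {v : G.V // G.IsInner v})
  obtain ⟨x, ξ, ⟨v0, hv0⟩, hid, hd1, hd2, he1, he2⟩ :=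
    (M.data hfull hample).exists_summand hM.1
  change G.InnerV at v0
  change ∀ v, M.space v at x
  change ∀ v, M.space v →ₗ[K] K at ξ
  refine ⟨x, ξ, ?_, ?_⟩
  · let φ : RepHom M M :=
      { app := fun v => (ξ v).smulRight (x v)
        comm := by
          intro e hs ht y
          simp only [LinearMap.smulRight_apply, map_smul]
          by_cases hw : G.weight F e = 1
          · exact (hd1 (⟨e, hs, ht, hw, rfl, rfl⟩ :
              A1 F (G.arrowSrc F e hs ht) (G.arrowTgt F e hs ht)) y).symm
          · exact (hd2 (⟨e, hs, ht, hw, rfl, rfl⟩ :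
              A2 F (G.arrowTgt F e hs ht) (G.arrowSrc F e hs ht)) y).symm }
    have hφ : ∀ v y, φ.app v y = ξ v y • x v := fun v y => rfl
    rcases hM.2 φ (by
      intro v y
      rw [hφ, hφ, map_smul]
      rcases hid v with h | h
      · have h' : ξ v (x v) = 1 := h
        rw [h']; simp
      · have h' : x v = 0 := h.1
        rw [h']; simp) with h | h
    · exfalso
      have h0 := h v0 (x v0)
      change ξ v0 (x v0) • x v0 = 0 at h0
      have h' : ξ v0 (x v0) = 1 := hv0
      rw [h', one_smul] at h0
      rw [h0] at h'
      simp at h'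
    · exact h
  · intro e hs ht
    by_cases hw : G.weight F e = 1
    · exact he1 (⟨e, hs, ht, hw, rfl, rfl⟩ :
        A1 F (G.arrowSrc F e hs ht) (G.arrowTgt F e hs ht))
    · exact he2 (⟨e, hs, ht, hw, rfl, rfl⟩ :
        A2 F (G.arrowTgt F e hs ht) (G.arrowSrc F e hs ht))

theorem iso_of_same (M N : G.Rep F K)
    (x : ∀ v, M.space v) (ξ : ∀ v, M.space v →ₗ[K] K) (hx : ∀ v y, ξ v y • x v = y)
    (ex : ∀ (e : G.E) (hs : G.IsInner (G.src e)) (ht : G.IsInner (G.tgt e)),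
        M.map e hs ht (x _) = 0 ∨ M.map e hs ht (x _) = x _)
    (x' : ∀ v, N.space v) (ξ' : ∀ v, N.space v →ₗ[K] K) (hx' : ∀ v y, ξ' v y • x' v = y)
    (ex' : ∀ (e : G.E) (hs : G.IsInner (G.src e)) (ht : G.IsInner (G.tgt e)),
        N.map e hs ht (x' _) = 0 ∨ N.map e hs ht (x' _) = x' _)
    (hv : ∀ v, x v = 0 ↔ x' v = 0)
    (he : ∀ (e : G.E) (hs : G.IsInner (G.src e)) (ht : G.IsInner (G.tgt e)),
        M.map e hs ht (x _) = 0 ↔ N.map e hs ht (x' _) = 0) : RepIso M N := by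
  have h1 : ∀ v, x v ≠ 0 → ξ v (x v) = 1 := by
    intro v h
    have h2 := hx v (x v)
    nth_rewrite 3 [← one_smul K (x v)] at h2
    exact smul_left_injective K h h2
  refine ⟨⟨fun v => (ξ v).smulRight (x' v), ?_⟩, ?_⟩
  · intro e hs ht y
    simp only [LinearMap.smulRight_apply, map_smul]
    have hy : M.map e hs ht y = ξ _ y • M.map e hs ht (x _) := by
      rw [← map_smul, hx]
    rw [hy, map_smul, smul_eq_mul, mul_smul]
    congr 1
    by_cases h0 : M.map e hs ht (x _) = 0
    · rw [h0, (he e hs ht).1 h0]; simp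
    · have hN : N.map e hs ht (x' _) = x' _ :=
        (ex' e hs ht).resolve_left (fun h => h0 ((he e hs ht).2 h))
      have hM := (ex e hs ht).resolve_left h0
      rw [hM] at h0
      rw [hM, hN, h1 _ h0, one_smul]
  · intro v
    constructor
    · rw [injective_iff_map_eq_zero]
      intro y hy
      simp only [LinearMap.smulRight_apply, smul_eq_zero] at hy
      rw [← hx v y]
      rcases hy with h | h
      · rw [h, zero_smul]
      · rw [(hv v).2 h, smul_zero]
    · intro z
      refine ⟨ξ' v z • x v, ?_⟩
      simp only [LinearMap.smulRight_apply, map_smul]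
      by_cases h : x v = 0
      · rw [← hx' v z, (hv v).1 h]; simp
      · rw [h1 v h, one_smul, hx']

end Translation

end DAG

/-- For a full DAG `G` with a fixed ample framing, the gentle
algebra `Λ(G)` is of finite representation type (finitely many isomorphism
classes of indecomposable modules), and every indecomposable `Λ(G)`-module has
dimension at most one at every vertex of the quiver. -/
theorem gentle_algebra_finite_type (G : DAG) (F : G.Framing)
    (hfull : G.Full) (hample : G.Ample F)
    (K : Type) [Field K] [IsAlgClosed K] :
    Finite (Quot (fun M N : {M : G.Rep F K // DAG.Indecomposable M} =>
        DAG.RepIso M.1 N.1)) ∧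
    ∀ M : G.Rep F K, DAG.Indecomposable M →
      ∀ v : G.InnerV, Module.finrank K (M.space v) ≤ 1 := by
  refine ⟨?_, ?_⟩
  · have : Finite G.InnerV := inferInstanceAs (Finite {v : G.V // G.IsInner v})
    have H := fun M : {M : G.Rep F K // DAG.Indecomposable M} =>
      DAG.indec_structure hfull hample M.1 M.2
    choose x ξ hx ex using H
    let inv : {M : G.Rep F K // DAG.Indecomposable M} → Set G.InnerV × Set G.E :=
      fun M => ({v | x M v = 0}, {e | ∃ hs ht, M.1.map e hs ht (x M _) = 0})
    have hinv : ∀ M N, inv M = inv N → DAG.RepIso M.1 N.1 := by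
      intro M N h
      have ha := congrArg Prod.fst h
      have hb := congrArg Prod.snd h
      refine DAG.iso_of_same M.1 N.1 (x M) (ξ M) (hx M) (ex M) (x N) (ξ N) (hx N) (ex N) ?_ ?_
      · intro v
        exact Set.ext_iff.1 ha v
      · intro e hs ht
        have := Set.ext_iff.1 hb e
        constructor
        · intro h0
          obtain ⟨_, _, h1⟩ := this.1 ⟨hs, ht, h0⟩
          exact h1
        · intro h0
          obtain ⟨_, _, h1⟩ := this.2 ⟨hs, ht, h0⟩
          exact h1
    refine Finite.of_injective (fun q => inv q.out) ?_
    intro q q' h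
    have := Quot.sound (r := fun M N : {M : G.Rep F K // DAG.Indecomposable M} =>
        DAG.RepIso M.1 N.1) (hinv _ _ h)
    rwa [Quot.out_eq, Quot.out_eq] at this
  · intro M hM v
    obtain ⟨x, ξ, hx, -⟩ := DAG.indec_structure hfull hample M hM
    exact finrank_le_one (x v) (fun y => ⟨ξ v y, hx v y⟩)
end
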